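/- Let A be a basic indecomposable artin algebra and Γ a cycle-finite component of the cyclic quiver _cΓ_A. Then the support supp(Γ) of Γ is a convex subcategory of A. -/

import Mathlib

/-!
Common framework: finite length modules over a ring, the radical of the module
category, cycles of indecomposable modules, Auslander-Reiten quivers,
translation quivers notions, and classes of artin algebras.
Right `A`-modules are formalized as left `Aᵐᵒᵖ`-modules.
-/

universe u

/-- A bundled object of `mod R`: a finite length `R`-module. -/
structure ModA (R : Type u) [Ring R] : Type (u + 1) where
  M : Type u
  [acg : AddCommGroup M]
  [mod : Module R M]
  finLen : IsFiniteLength R M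

attribute [instance] ModA.acg ModA.mod

/-- A bundled (not necessarily finite length) `R`-module. -/
structure RawMod (R : Type u) [Ring R] : Type (u + 1) where
  M : Type u
  [acg : AddCommGroup M]
  [mod : Module R M]

attribute [instance] RawMod.acg RawMod.mod

/-- A module is indecomposable iff it is nonzero and its endomorphism ring has no
nontrivial idempotents. -/
def IsIndecMod (R : Type u) [Ring R] (M : Type u) [AddCommGroup M] [Module R M] : Prop :=
  Nontrivial M ∧ ∀ f : Module.End R M, f * f = f → f = 0 ∨ f = 1

namespace ModA

variable {R : Type u} [Ring R]

/-- Indecomposability of an object of `mod R`. -/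
def IsIndec (X : ModA R) : Prop := IsIndecMod R X.M

/-- Isomorphism of objects of `mod R`. -/
def Iso (X Y : ModA R) : Prop := Nonempty (X.M ≃ₗ[R] Y.M)

end ModA

/-- Membership in the radical `rad(X, Y)` of the category `mod R`: a map `f : X → Y`
belongs to the radical iff for every indecomposable `Z` and all `g : Z → X`, `h : Y → Z`
the composite `h ∘ f ∘ g` is not an isomorphism. -/
def InRad {R : Type u} [Ring R] {X Y : ModA R} (f : X.M →ₗ[R] Y.M) : Prop :=
  ∀ Z : ModA R, Z.IsIndec → ∀ (g : Z.M →ₗ[R] X.M) (h : Y.M →ₗ[R] Z.M),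
    ¬Function.Bijective (h.comp (f.comp g))

/-- The powers `rad^n` of the radical of `mod R`. -/
def radPow (R : Type u) [Ring R] : ℕ → ∀ X Y : ModA R, AddSubgroup (X.M →ₗ[R] Y.M)
  | 0, _, _ => ⊤
  | n + 1, X, Y => AddSubgroup.closure
      {f | ∃ (Z : ModA R) (g : X.M →ₗ[R] Z.M) (h : Z.M →ₗ[R] Y.M),
        InRad g ∧ h ∈ radPow R n Z Y ∧ f = h.comp g}

/-- Membership in the infinite radical `rad^∞ = ⋂ₙ radⁿ` of `mod R`. -/
def InRadInf {R : Type u} [Ring R] {X Y : ModA R} (f : X.M →ₗ[R] Y.M) : Prop :=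
  ∀ n : ℕ, f ∈ radPow R n X Y

/-- A cycle in `ind R`: a sequence of nonzero nonisomorphisms
`M₀ → M₁ → ⋯ → M_{r-1} → M_r = M₀` between indecomposable modules. -/
structure ModCycle (R : Type u) [Ring R] : Type (u + 1) where
  len : ℕ
  len_pos : 0 < len
  obj : Fin (len + 1) → ModA R
  obj_indec : ∀ i, (obj i).IsIndec
  closed : obj (Fin.last len) = obj 0
  hom : ∀ i : Fin len, (obj i.castSucc).M →ₗ[R] (obj i.succ).M
  hom_ne_zero : ∀ i, hom i ≠ 0
  hom_not_iso : ∀ i, ¬Function.Bijective (hom i)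

/-- A cycle is finite if none of its homomorphisms lies in the infinite radical. -/
def ModCycle.IsFiniteCycle {R : Type u} [Ring R] (c : ModCycle R) : Prop :=
  ∀ i, ¬InRadInf (c.hom i)

/-- The cycle passes through the module `M`. -/
def ModCycle.Passes {R : Type u} [Ring R] (c : ModCycle R) (M : ModA R) : Prop :=
  ∃ i, (c.obj i).Iso M

/-- A module is cycle-finite if it lies on a cycle and every cycle through it is finite. -/
def IsCycleFiniteModule {R : Type u} [Ring R] (M : ModA R) : Prop :=
  (∃ c : ModCycle R, c.Passes M) ∧ ∀ c : ModCycle R, c.Passes M → c.IsFiniteCycle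

/-- A module is directing if it lies on no cycle. -/
def IsDirectingModule {R : Type u} [Ring R] (M : ModA R) : Prop :=
  ¬∃ c : ModCycle R, c.Passes M

section Irreducible

variable {R : Type u} [Ring R]

/-- `f` is a split monomorphism (a section). -/
def SplitMonoMap {X Y : ModA R} (f : X.M →ₗ[R] Y.M) : Prop :=
  ∃ r : Y.M →ₗ[R] X.M, r.comp f = LinearMap.id

/-- `f` is a split epimorphism (a retraction). -/
def SplitEpiMap {X Y : ModA R} (f : X.M →ₗ[R] Y.M) : Prop :=
  ∃ s : Y.M →ₗ[R] X.M, f.comp s = LinearMap.id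

/-- `f` is an irreducible homomorphism. -/
def IsIrred {X Y : ModA R} (f : X.M →ₗ[R] Y.M) : Prop :=
  ¬SplitMonoMap f ∧ ¬SplitEpiMap f ∧
    ∀ (Z : ModA R) (g : X.M →ₗ[R] Z.M) (h : Z.M →ₗ[R] Y.M), h.comp g = f →
      SplitMonoMap g ∨ SplitEpiMap h

end Irreducible

/-- An almost split (Auslander-Reiten) sequence `0 → l → m → r → 0` in `mod R`. -/
structure AlmostSplitSeq (R : Type u) [Ring R] : Type (u + 1) where
  l : ModA R
  m : ModA R
  r : ModA R
  f : l.M →ₗ[R] m.M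
  g : m.M →ₗ[R] r.M
  inj : Function.Injective f
  surj : Function.Surjective g
  exact : LinearMap.range f = LinearMap.ker g
  not_split : ¬SplitEpiMap g
  l_indec : l.IsIndec
  r_indec : r.IsIndec
  right_almost : ∀ (Z : ModA R) (h : Z.M →ₗ[R] r.M), ¬SplitEpiMap h →
      ∃ h' : Z.M →ₗ[R] m.M, g.comp h' = h
  left_almost : ∀ (Z : ModA R) (h : l.M →ₗ[R] Z.M), ¬SplitMonoMap h →
      ∃ h' : m.M →ₗ[R] Z.M, h'.comp f = h

/-- `N ≅ τ M` for the Auslander-Reiten translation `τ = DTr`. -/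
def IsTauOf {R : Type u} [Ring R] (N M : ModA R) : Prop :=
  ∃ s : AlmostSplitSeq R, s.l.Iso N ∧ s.r.Iso M

/-- The indecomposable objects of `mod R`. -/
def IndecModA (R : Type u) [Ring R] := {X : ModA R // X.IsIndec}

/-- Isomorphism is an equivalence relation on indecomposable modules. -/
def isoSetoid (R : Type u) [Ring R] : Setoid (IndecModA R) where
  r X Y := X.1.Iso Y.1
  iseqv :=
    { refl := fun X => ⟨LinearEquiv.refl R X.1.M⟩
      symm := fun h => h.elim fun e => ⟨e.symm⟩
      trans := fun h h' => h.elim fun e => h'.elim fun e' => ⟨e.trans e'⟩ }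

/-- The vertices of the Auslander-Reiten quiver `Γ_R`: isomorphism classes of
indecomposable modules in `mod R`. -/
def ARVertex (R : Type u) [Ring R] := Quotient (isoSetoid R)

/-- The vertex of `Γ_R` given by an indecomposable module. -/
def ARVertex.mk {R : Type u} [Ring R] (X : IndecModA R) : ARVertex R :=
  Quotient.mk (isoSetoid R) X

section ARQuiver

variable {R : Type u} [Ring R]

/-- The arrows of the Auslander-Reiten quiver: `x → y` iff there is an irreducible
homomorphism between representatives. -/
def ARArrow (x y : ARVertex R) : Prop :=
  ∃ (X Y : IndecModA R) (f : X.1.M →ₗ[R] Y.1.M),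
    IsIrred f ∧ ARVertex.mk X = x ∧ ARVertex.mk Y = y

/-- `TauRel x y` iff `x = τ y` in the Auslander-Reiten quiver. -/
def TauRel (x y : ARVertex R) : Prop :=
  ∃ X Y : IndecModA R, ARVertex.mk X = x ∧ ARVertex.mk Y = y ∧ IsTauOf X.1 Y.1

/-- A vertex given by an (indecomposable) projective module. -/
def IsProjVertex (x : ARVertex R) : Prop :=
  ∃ X : IndecModA R, ARVertex.mk X = x ∧ Module.Projective R X.1.M

/-- A vertex given by an (indecomposable) injective module. -/
def IsInjVertex (x : ARVertex R) : Prop :=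
  ∃ X : IndecModA R, ARVertex.mk X = x ∧ Module.Injective R X.1.M

/-- The vertex lies on an oriented cycle of `Γ_R`. -/
def OnARCycle (x : ARVertex R) : Prop := Relation.TransGen ARArrow x x

/-- An edge (arrow in either direction) of the underlying graph of `Γ_R`. -/
def ARStep (x y : ARVertex R) : Prop := ARArrow x y ∨ ARArrow y x

/-- `D` is a connected component of the full subquiver of `Γ_R` on the vertex set `S`. -/
def IsComponentOf (S D : Set (ARVertex R)) : Prop :=
  D ⊆ S ∧ D.Nonempty ∧
    (∀ x ∈ D, ∀ y ∈ S, ARStep x y → y ∈ D) ∧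
    ∀ x ∈ D, ∀ y ∈ D, Relation.ReflTransGen (fun a b => a ∈ S ∧ b ∈ S ∧ ARStep a b) x y

/-- `C` is a connected component of `Γ_R`. -/
def IsARComponent (C : Set (ARVertex R)) : Prop := IsComponentOf Set.univ C

/-- The vertex lies on an oriented cycle all of whose vertices belong to `S`. -/
def OnCycleIn (S : Set (ARVertex R)) (x : ARVertex R) : Prop :=
  Relation.TransGen (fun a b => a ∈ S ∧ b ∈ S ∧ ARArrow a b) x x

/-- `Γ` is a connected component of the cyclic quiver `_cΓ_R` (a cyclic component). -/
def IsCyclicComponent (Γ : Set (ARVertex R)) : Prop :=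
  IsComponentOf {x | OnARCycle x} Γ

/-- A vertex represented by a cycle-finite module. -/
def IsCycleFiniteVertex (x : ARVertex R) : Prop :=
  ∃ X : IndecModA R, ARVertex.mk X = x ∧ IsCycleFiniteModule X.1

/-- A vertex represented by a directing module. -/
def IsDirectingVertex (x : ARVertex R) : Prop :=
  ∃ X : IndecModA R, ARVertex.mk X = x ∧ IsDirectingModule X.1

/-- A cycle-finite cyclic component: a cyclic component containing a cycle-finite module. -/
def IsCycleFiniteCyclicComponent (Γ : Set (ARVertex R)) : Prop :=
  IsCyclicComponent Γ ∧ ∃ x ∈ Γ, IsCycleFiniteVertex x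

/-- A full translation subquiver is cyclic if each of its vertices lies on an oriented
cycle inside it. -/
def IsCyclicSub (S : Set (ARVertex R)) : Prop := ∀ x ∈ S, OnCycleIn S x

/-- A full translation subquiver is coherent: every projective vertex is the start of an
infinite sectional path inside it, and every injective vertex is the end of an infinite
sectional path inside it. -/
def IsCoherentSub (S : Set (ARVertex R)) : Prop :=
  (∀ x ∈ S, IsProjVertex x → ∃ c : ℕ → ARVertex R, c 0 = x ∧ (∀ n, c n ∈ S) ∧
      (∀ n, ARArrow (c n) (c (n + 1))) ∧ ∀ n, ¬TauRel (c n) (c (n + 2))) ∧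
  (∀ x ∈ S, IsInjVertex x → ∃ c : ℕ → ARVertex R, c 0 = x ∧ (∀ n, c n ∈ S) ∧
      (∀ n, ARArrow (c (n + 1)) (c n)) ∧ ∀ n, ¬TauRel (c (n + 2)) (c n))

/-- `S` is a convex subquiver of (the full subquiver on) `C`: every path in `C` with
source and target in `S` has all its vertices in `S`. -/
def ConvexIn (C S : Set (ARVertex R)) : Prop :=
  ∀ (n : ℕ) (c : ℕ → ARVertex R), (∀ k ≤ n, c k ∈ C) →
    (∀ k < n, ARArrow (c k) (c (k + 1))) → c 0 ∈ S → c n ∈ S → ∀ k ≤ n, c k ∈ S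

/-- `S` is the core of the almost acyclic component `C`: the finite convex subquiver of
`C` containing all vertices lying on oriented cycles in `C`. -/
def IsCoreOf (C S : Set (ARVertex R)) : Prop :=
  S ⊆ C ∧ S.Finite ∧ ConvexIn C S ∧ ∀ x ∈ C, OnCycleIn C x → x ∈ S

/-- A component is almost acyclic if all but finitely many of its vertices do not lie on
oriented cycles. -/
def IsAlmostAcyclicComp (C : Set (ARVertex R)) : Prop := {x ∈ C | OnCycleIn C x}.Finite

/-- A component is almost cyclic if its cyclic part is cofinite. -/
def IsAlmostCyclicComp (C : Set (ARVertex R)) : Prop := {x ∈ C | ¬OnCycleIn C x}.Finite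

/-- Two vertices lie in the same `τ`-orbit. -/
def TauConn (x y : ARVertex R) : Prop :=
  Relation.ReflTransGen (fun a b => TauRel a b ∨ TauRel b a) x y

/-- The left stable part of `C`: remove the `τ`-orbits of projective vertices. -/
def leftStable (C : Set (ARVertex R)) : Set (ARVertex R) :=
  {x | x ∈ C ∧ ¬∃ y, TauConn x y ∧ IsProjVertex y}

/-- The right stable part of `C`: remove the `τ`-orbits of injective vertices. -/
def rightStable (C : Set (ARVertex R)) : Set (ARVertex R) :=
  {x | x ∈ C ∧ ¬∃ y, TauConn x y ∧ IsInjVertex y}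

/-- The stable part of `C`. -/
def stablePart (C : Set (ARVertex R)) : Set (ARVertex R) := leftStable C ∩ rightStable C

end ARQuiver

/-- The arrows of the translation quiver `ℤA∞/(τ^r)`, with vertices indexed by the
`τ`-orbit coordinate in `ZMod r` and the quasi-length (minus one) in `ℕ`. -/
def TubeArrow {r : ℕ} : ZMod r × ℕ → ZMod r × ℕ → Prop := fun u v =>
  (v.1 = u.1 ∧ v.2 = u.2 + 1) ∨ (v.1 = u.1 + 1 ∧ u.2 = v.2 + 1)

section Tube

variable {R : Type u} [Ring R]

/-- `T` is a stable tube of rank `r`, parametrized by `φ : ℤA∞/(τ^r) → Γ_R`. -/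
def IsStableTubeVia (T : Set (ARVertex R)) (r : ℕ) (φ : ZMod r × ℕ → ARVertex R) : Prop :=
  0 < r ∧ Function.Injective φ ∧ Set.range φ = T ∧
    (∀ u v, TubeArrow u v → ARArrow (φ u) (φ v)) ∧
    (∀ u v, ARArrow (φ u) (φ v) → TubeArrow u v) ∧
    ∀ (i : ZMod r) (n : ℕ), TauRel (φ (i - 1, n)) (φ (i, n))

/-- `T` is a stable tube. -/
def IsStableTube (T : Set (ARVertex R)) : Prop := ∃ r φ, IsStableTubeVia T r φ

end Tube

section Separating

variable {R : Type u} [Ring R]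

/-- A family of vertices is generalized standard if `rad^∞` vanishes between its modules. -/
def GeneralizedStandardSet (U : Set (ARVertex R)) : Prop :=
  ∀ X Y : IndecModA R, ARVertex.mk X ∈ U → ARVertex.mk Y ∈ U →
    ∀ f : X.1.M →ₗ[R] Y.1.M, InRadInf f → f = 0

/-- `S` is (isomorphic to) a composition factor (a subquotient) of `M`. -/
def IsCompFactorMod (R : Type u) [Ring R] (S : Type u) [AddCommGroup S] [Module R S]
    (M : Type u) [AddCommGroup M] [Module R M] : Prop :=
  ∃ N' N : Submodule R M, N' ≤ N ∧
    Nonempty ((↥N ⧸ N'.comap N.subtype) ≃ₗ[R] S)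

/-- A family of vertices is sincere if every simple module is a composition factor of one
of its modules. -/
def SincereSet (U : Set (ARVertex R)) : Prop :=
  ∀ (S : Type u) [AddCommGroup S] [Module R S], IsSimpleModule R S →
    ∃ x ∈ U, ∃ X : IndecModA R, ARVertex.mk X = x ∧ IsCompFactorMod R S X.1.M

/-- All homomorphisms from modules with vertex in `U` to modules with vertex in `V` vanish. -/
def HomVanish (U V : Set (ARVertex R)) : Prop :=
  ∀ X Y : IndecModA R, ARVertex.mk X ∈ U → ARVertex.mk Y ∈ V →
    ∀ f : X.1.M →ₗ[R] Y.1.M, f = 0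

/-- Every homomorphism from a module in `U` to a module in `V` factors through the
additive closure of the modules in `W`. -/
def FactorsThrough (U W V : Set (ARVertex R)) : Prop :=
  ∀ X Y : IndecModA R, ARVertex.mk X ∈ U → ARVertex.mk Y ∈ V →
    ∀ f : X.1.M →ₗ[R] Y.1.M, ∃ (k : ℕ) (Z : Fin k → IndecModA R)
      (g : ∀ i, X.1.M →ₗ[R] (Z i).1.M) (h : ∀ i, (Z i).1.M →ₗ[R] Y.1.M),
      (∀ i, ARVertex.mk (Z i) ∈ W) ∧ f = ∑ i, (h i).comp (g i)

/-- `cs` is a separating family of components of `Γ_R`. -/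
def IsSeparatingFamily (cs : Set (Set (ARVertex R))) : Prop :=
  ∃ ps qs : Set (Set (ARVertex R)),
    (∀ C ∈ ps, IsARComponent C) ∧ (∀ C ∈ cs, IsARComponent C) ∧ (∀ C ∈ qs, IsARComponent C) ∧
    (∀ C, IsARComponent C → C ∈ ps ∨ C ∈ cs ∨ C ∈ qs) ∧
    (∀ C ∈ ps, C ∉ cs ∧ C ∉ qs) ∧ (∀ C ∈ cs, C ∉ qs) ∧
    SincereSet (⋃₀ cs) ∧ GeneralizedStandardSet (⋃₀ cs) ∧
    HomVanish (⋃₀ qs) (⋃₀ ps) ∧ HomVanish (⋃₀ qs) (⋃₀ cs) ∧ HomVanish (⋃₀ cs) (⋃₀ ps) ∧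
    FactorsThrough (⋃₀ ps) (⋃₀ cs) (⋃₀ qs)

end Separating

/-! ### Classes of algebras via their Auslander-Reiten quivers.
For a ring `B`, the category `mod B` of finitely generated right `B`-modules is
realized as the category of finite length left `Bᵐᵒᵖ`-modules. -/

/-- An algebra is of finite representation type if it has only finitely many isomorphism
classes of indecomposable finitely generated (right) modules. -/
def IsFiniteRepTypeAlg (B : Type u) [Ring B] : Prop :=
  (Set.univ : Set (ARVertex Bᵐᵒᵖ)).Finite

/-- An algebra is cycle-finite if all cycles in `ind B` are finite. -/
def IsCycleFiniteAlg (B : Type u) [Ring B] : Prop :=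
  ∀ c : ModCycle Bᵐᵒᵖ, c.IsFiniteCycle

/-- A generalized multicoil algebra: an algebra whose Auslander-Reiten quiver admits a
separating family of almost cyclic coherent components. -/
def IsGeneralizedMulticoilAlgebra (B : Type u) [Ring B] : Prop :=
  ∃ cs : Set (Set (ARVertex Bᵐᵒᵖ)),
    (∀ C ∈ cs, IsARComponent C ∧ IsAlmostCyclicComp C ∧ IsCoherentSub C) ∧
    IsSeparatingFamily cs

/-- A generalized double tilted algebra: an algebra whose Auslander-Reiten quiver admits
a separating almost acyclic component (a connecting component). -/
def IsGeneralizedDoubleTiltedAlgebra (B : Type u) [Ring B] : Prop :=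
  ∃ C : Set (ARVertex Bᵐᵒᵖ),
    IsARComponent C ∧ IsAlmostAcyclicComp C ∧ IsSeparatingFamily {C}

/-- A concealed canonical algebra: an algebra whose Auslander-Reiten quiver admits a
separating family of stable tubes. -/
def IsConcealedCanonicalAlgebra (B : Type u) [Ring B] : Prop :=
  ∃ ts : Set (Set (ARVertex Bᵐᵒᵖ)), (∀ T ∈ ts, IsStableTube T) ∧ IsSeparatingFamily ts

/-- A generic module: an indecomposable module of infinite length with finite endolength. -/
def IsGenericModule (R : Type u) [Ring R] (N : RawMod R) : Prop :=
  IsIndecMod R N.M ∧ ¬IsFiniteLength R N.M ∧ IsFiniteLength (Module.End R N.M) N.M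

/-- The endolength of a module: its length over its endomorphism ring. -/
noncomputable def endolength (R : Type u) [Ring R] (N : RawMod R) : WithBot ℕ∞ :=
  Order.krullDim (Submodule (Module.End R N.M) N.M)

/-- Generic tameness in the sense of Crawley-Boevey: for each `d` there are only finitely
many isomorphism classes of generic (right) modules of endolength `d`. -/
def IsGenericallyTameAlg (B : Type u) [Ring B] : Prop :=
  ∀ d : ℕ, ∃ (k : ℕ) (T : Fin k → RawMod Bᵐᵒᵖ),
    ∀ N : RawMod Bᵐᵒᵖ, IsGenericModule Bᵐᵒᵖ N → endolength Bᵐᵒᵖ N = (d : ℕ∞) →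
      ∃ i, Nonempty (N.M ≃ₗ[Bᵐᵒᵖ] (T i).M)

/-- A tame generalized multicoil algebra. -/
def IsTameGeneralizedMulticoilAlgebra (B : Type u) [Ring B] : Prop :=
  IsGeneralizedMulticoilAlgebra B ∧ IsGenericallyTameAlg B

/-- A tame generalized double tilted algebra. -/
def IsTameGeneralizedDoubleTiltedAlgebra (B : Type u) [Ring B] : Prop :=
  IsGeneralizedDoubleTiltedAlgebra B ∧ IsGenericallyTameAlg B

/-! ### The quiver of an algebra, convex idempotents, basic and connected algebras -/

section AlgebraSide

variable (A : Type u) [Ring A]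

/-- The Jacobson radical of `A` (as a left ideal; it is in fact two-sided). -/
def jacobsonRad : Ideal A := (⊥ : Ideal A).jacobson

/-- The square of the Jacobson radical of `A`. -/
def jacobsonRadSq : Ideal A :=
  Ideal.span {x | ∃ a ∈ jacobsonRad A, ∃ b ∈ jacobsonRad A, x = a * b}

/-- A primitive idempotent of `A`. -/
def IsPrimitiveIdempotent (e : A) : Prop :=
  IsIdempotentElem e ∧ e ≠ 0 ∧
    ∀ f g : A, IsIdempotentElem f → IsIdempotentElem g → f * g = 0 → g * f = 0 →
      e = f + g → f = 0 ∨ g = 0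

/-- A complete family of pairwise orthogonal primitive idempotents of `A`; its indices
are the vertices of the quiver `Q_A` of `A`. -/
structure CompleteIdemFamily (A : Type u) [Ring A] where
  n : ℕ
  e : Fin n → A
  prim : ∀ i, IsPrimitiveIdempotent A (e i)
  orth : ∀ i j, i ≠ j → e i * e j = 0
  total : ∑ i, e i = 1

/-- There is an arrow `i → j` in the quiver `Q_A` iff `e_i (rad A) e_j ⊄ (rad A)²`. -/
def QAarrow (E : CompleteIdemFamily A) (i j : Fin E.n) : Prop :=
  ∃ y ∈ jacobsonRad A, E.e i * y * E.e j ∉ jacobsonRadSq A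

/-- A set of vertices of `Q_A` is convex if every path of `Q_A` with source and target in
it has all its vertices in it. -/
def ConvexVertexSet (E : CompleteIdemFamily A) (S : Set (Fin E.n)) : Prop :=
  ∀ (n : ℕ) (c : ℕ → Fin E.n), (∀ k < n, QAarrow A E (c k) (c (k + 1))) →
    c 0 ∈ S → c n ∈ S → ∀ k ≤ n, c k ∈ S

/-- A convex idempotent of `A`: a sum of pairwise orthogonal primitive idempotents
corresponding to the vertices of a convex subquiver of `Q_A`. -/
def IsConvexIdempotent (e : A) : Prop :=
  ∃ (E : CompleteIdemFamily A) (S : Finset (Fin E.n)),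
    ConvexVertexSet A E ↑S ∧ e = ∑ i ∈ S, E.e i

/-- The corner `eAe` of `A` at an idempotent `e`, as a nonunital subring (it is a unital
ring with unit `e`). -/
def cornerRing (e : A) : NonUnitalSubring A where
  carrier := {x | e * x = x ∧ x * e = x}
  zero_mem' := by simp
  add_mem' := by
    rintro a b ⟨ha1, ha2⟩ ⟨hb1, hb2⟩
    constructor
    · rw [mul_add, ha1, hb1]
    · rw [add_mul, ha2, hb2]
  neg_mem' := by
    rintro a ⟨ha1, ha2⟩
    constructor
    · rw [mul_neg, ha1]
    · rw [neg_mul, ha2]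
  mul_mem' := by
    rintro a b ⟨ha1, ha2⟩ ⟨hb1, hb2⟩
    constructor
    · rw [← mul_assoc, ha1]
    · rw [mul_assoc, hb2]

/-- An (indecomposable =) connected algebra: no nontrivial central idempotents. -/
def IsConnectedAlgebra : Prop :=
  Nontrivial A ∧ ∀ e : A, IsIdempotentElem e → e ∈ Set.center A → e = 0 ∨ e = 1

/-- A basic algebra: distinct orthogonal primitive idempotents have nonisomorphic
associated indecomposable projective right modules. -/
def IsBasicAlgebra : Prop :=
  ¬∃ e f : A, IsPrimitiveIdempotent A e ∧ IsPrimitiveIdempotent A f ∧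
    e * f = 0 ∧ f * e = 0 ∧
    Nonempty ((Submodule.span Aᵐᵒᵖ {e} : Submodule Aᵐᵒᵖ A) ≃ₗ[Aᵐᵒᵖ]
      (Submodule.span Aᵐᵒᵖ {f} : Submodule Aᵐᵒᵖ A))

end AlgebraSide

/-! ### Support algebras and faithful algebras of families of vertices -/

section Support

variable (A : Type u) [Ring A]

/-- The radical of a module: the intersection of its maximal submodules. -/
def modRadical (R : Type u) [Ring R] (M : Type u) [AddCommGroup M] [Module R M] :
    Submodule R M :=
  sInf {N | IsCoatom N}

/-- The intersection `ann_A(Γ)` of the annihilators of all right `A`-modules whose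
vertices belong to `Γ`, as a two-sided ideal of `A`. -/
def annTwoSidedIdeal (Γ : Set (ARVertex Aᵐᵒᵖ)) : TwoSidedIdeal A :=
  TwoSidedIdeal.mk'
    {a | ∀ x ∈ Γ, ∀ X : IndecModA Aᵐᵒᵖ, ARVertex.mk X = x →
      ∀ m : X.1.M, MulOpposite.op a • m = 0}
    (by intro x _ X _ m; simp)
    (by
      intro a b ha hb x hx X hX m
      have : MulOpposite.op (a + b) • m = MulOpposite.op a • m + MulOpposite.op b • m := by
        rw [← add_smul]; rfl
      rw [this, ha x hx X hX m, hb x hx X hX m, add_zero])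
    (by
      intro a ha x hx X hX m
      have : MulOpposite.op (-a) • m = -(MulOpposite.op a • m) := by
        rw [← neg_smul]; rfl
      rw [this, ha x hx X hX m, neg_zero])
    (by
      intro a b hb x hx X hX m
      have : MulOpposite.op (a * b) • m = MulOpposite.op b • (MulOpposite.op a • m) := by
        rw [← mul_smul]; rfl
      rw [this, hb x hx X hX _])
    (by
      intro a b ha x hx X hX m
      have : MulOpposite.op (a * b) • m = MulOpposite.op b • (MulOpposite.op a • m) := by
        rw [← mul_smul]; rfl
      rw [this, ha x hx X hX m, smul_zero])

/-- The faithful algebra `B(Γ) = A / ann_A(Γ)` of a family `Γ` of vertices of `Γ_A`. -/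
abbrev faithfulAlg (Γ : Set (ARVertex Aᵐᵒᵖ)) : Type u :=
  (annTwoSidedIdeal A Γ).ringCon.Quotient

/-- The canonical projection `A → B(Γ)`. -/
def faithfulProj (Γ : Set (ARVertex Aᵐᵒᵖ)) : A →+* faithfulAlg A Γ :=
  RingCon.mk' (annTwoSidedIdeal A Γ).ringCon

/-- The trace ideal `t_A(Γ)`: the two-sided ideal of `A` generated by the images of all
homomorphisms of right `A`-modules from `Q` to `A`. -/
def traceIdeal (Q : Submodule Aᵐᵒᵖ A) : TwoSidedIdeal A :=
  TwoSidedIdeal.span (⋃ f : ↥Q →ₗ[Aᵐᵒᵖ] A, Set.range f)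

/-- A decomposition `A = P_Γ ⊕ Q_Γ` of `A` in `mod A` such that the simple summands of
`P_Γ / rad P_Γ` are exactly the simple composition factors of the modules in `Γ`. -/
structure GammaDecomp (A : Type u) [Ring A] (Γ : Set (ARVertex Aᵐᵒᵖ)) where
  P : Submodule Aᵐᵒᵖ A
  Q : Submodule Aᵐᵒᵖ A
  compl : IsCompl P Q
  top_factors : ∀ (S : Type u) [AddCommGroup S] [Module Aᵐᵒᵖ S], IsSimpleModule Aᵐᵒᵖ S →
    (IsCompFactorMod Aᵐᵒᵖ S (↥P ⧸ modRadical Aᵐᵒᵖ ↥P) ↔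
      ∃ x ∈ Γ, ∃ X : IndecModA Aᵐᵒᵖ, ARVertex.mk X = x ∧ IsCompFactorMod Aᵐᵒᵖ S X.1.M)

end Support

/-- Restriction of scalars along a surjective ring homomorphism `π : A → B` identifies a
vertex `y` of `Γ_B` with a vertex `x` of `Γ_A`: representatives have the same underlying
group, with the `A`-action obtained from the `B`-action through `π`. -/
def VertexRestrictsTo {A B : Type u} [Ring A] [Ring B] (π : A →+* B)
    (y : ARVertex Bᵐᵒᵖ) (x : ARVertex Aᵐᵒᵖ) : Prop :=
  ∃ (N : IndecModA Bᵐᵒᵖ) (X : IndecModA Aᵐᵒᵖ), ARVertex.mk N = y ∧ ARVertex.mk X = x ∧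
    ∃ e : X.1.M ≃+ N.1.M, ∀ (a : A) (m : X.1.M),
      e (MulOpposite.op a • m) = MulOpposite.op (π a) • e m

/-! ### `K`-module structures on Hom-groups, lengths, and Ext -/

section KLength

variable (K B : Type u) [CommRing K] [Ring B] [Algebra K B]
variable (X N : Type u) [AddCommGroup X] [Module B X] [AddCommGroup N] [Module B N]

/-- The action of `K` on `B`-linear maps, through `algebraMap K B`. -/
def homKSMul (k : K) (f : X →ₗ[B] N) : X →ₗ[B] N where
  toFun x := algebraMap K B k • f x
  map_add' x y := by show algebraMap K B k • f (x + y) = _; rw [map_add, smul_add]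
  map_smul' b x := by
    simp only [map_smul, RingHom.id_apply, smul_smul]
    rw [Algebra.commutes]

/-- The `K`-module structure on the group of `B`-linear maps. -/
def homKModule : Module K (X →ₗ[B] N) where
  smul := homKSMul K B X N
  one_smul f := LinearMap.ext fun x => by
    show algebraMap K B 1 • f x = f x
    rw [map_one, one_smul]
  mul_smul k l f := LinearMap.ext fun x => by
    show algebraMap K B (k * l) • f x = algebraMap K B k • algebraMap K B l • f x
    rw [map_mul, mul_smul]
  smul_zero k := LinearMap.ext fun x => by
    show algebraMap K B k • (0 : X →ₗ[B] N) x = 0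
    simp
  smul_add k f g := LinearMap.ext fun x => by
    show algebraMap K B k • (f + g) x = algebraMap K B k • f x + algebraMap K B k • g x
    simp [smul_add]
  add_smul k l f := LinearMap.ext fun x => by
    show algebraMap K B (k + l) • f x = algebraMap K B k • f x + algebraMap K B l • f x
    rw [map_add, add_smul]
  zero_smul f := LinearMap.ext fun x => by
    show algebraMap K B 0 • f x = 0
    rw [map_zero, zero_smul]

/-- The length `|Hom_B(X, N)|` of the group of `B`-linear maps `X → N` as a `K`-module. -/
noncomputable def homKLength : WithBot ℕ∞ :=
  letI : Module K (X →ₗ[B] N) := homKModule K B X N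
  Order.krullDim (Submodule K (X →ₗ[B] N))

/-- The canonical surjection from the free module on (the underlying set of) `X` to `X`. -/
noncomputable def freeCover : (X →₀ B) →ₗ[B] X :=
  Finsupp.linearCombination B id

/-- The length `|Ext¹_B(X, N)|` of `Ext¹` as a `K`-module, computed as the cokernel of
`Hom_B(F, N) → Hom_B(Ω X, N)` for the canonical free cover `F → X` with kernel `Ω X`. -/
noncomputable def ext1KLength : WithBot ℕ∞ :=
  letI : Module K (↥(LinearMap.ker (freeCover B X)) →ₗ[B] N) :=
    homKModule K B (↥(LinearMap.ker (freeCover B X))) N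
  let D : Submodule K (↥(LinearMap.ker (freeCover B X)) →ₗ[B] N) :=
    { carrier := {f | ∃ g : (X →₀ B) →ₗ[B] N,
        f = g.comp (LinearMap.ker (freeCover B X)).subtype}
      add_mem' := by
        rintro f₁ f₂ ⟨g₁, rfl⟩ ⟨g₂, rfl⟩
        exact ⟨g₁ + g₂, rfl⟩
      zero_mem' := ⟨0, rfl⟩
      smul_mem' := by
        rintro k f ⟨g, rfl⟩
        exact ⟨homKSMul K B _ N k g, rfl⟩ }
  Order.krullDim (Submodule K ((↥(LinearMap.ker (freeCover B X)) →ₗ[B] N) ⧸ D))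

end KLength

/-- Vanishing of `Ext¹_B(X, N)`: every short exact sequence `0 → N → E → X → 0` splits. -/
def Ext1IsZero (B : Type u) [Ring B] (X : Type u) [AddCommGroup X] [Module B X]
    (N : Type u) [AddCommGroup N] [Module B N] : Prop :=
  ∀ (E : Type u) [AddCommGroup E] [Module B E], ∀ (f : N →ₗ[B] E) (g : E →ₗ[B] X),
    Function.Injective f → Function.Surjective g → LinearMap.range f = LinearMap.ker g →
    ∃ s : X →ₗ[B] E, g.comp s = LinearMap.id

/-- The syzygy `Ω X`: the kernel of the canonical free cover of `X`. -/
noncomputable def syzygyRaw (B : Type u) [Ring B] (X : RawMod B) : RawMod B :=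
  ⟨↥(LinearMap.ker (freeCover B X.M))⟩

/-- Iterated syzygies. -/
noncomputable def syzygyIter (B : Type u) [Ring B] : ℕ → RawMod B → RawMod B
  | 0, X => X
  | n + 1, X => syzygyRaw B (syzygyIter B n X)

/-- Vanishing of `Ext^r_B(X, N)` for `r ≥ 1`, via `Ext^r(X, N) ≅ Ext¹(Ω^{r-1} X, N)`. -/
noncomputable def ExtIsZero (B : Type u) [Ring B] (X N : RawMod B) (r : ℕ) : Prop :=
  Ext1IsZero B (syzygyIter B (r - 1) X).M N.M

/-- `[X] = [M]` in the Grothendieck group `K₀`: the modules `X` and `M` have the same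
composition factors including multiplicities. -/
def SameCompFactors {B : Type u} [Ring B] (X M : ModA B) : Prop :=
  ∃ (n : ℕ) (s : Fin (n + 1) → Submodule B X.M) (t : Fin (n + 1) → Submodule B M.M)
    (σ : Equiv.Perm (Fin n)),
    s 0 = ⊥ ∧ s (Fin.last n) = ⊤ ∧ t 0 = ⊥ ∧ t (Fin.last n) = ⊤ ∧
    (∀ i : Fin n, s i.castSucc ≤ s i.succ) ∧ (∀ i : Fin n, t i.castSucc ≤ t i.succ) ∧
    ∀ i : Fin n,
      IsSimpleModule B (↥(s i.succ) ⧸ (s i.castSucc).comap (s i.succ).subtype) ∧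
      Nonempty ((↥(s i.succ) ⧸ (s i.castSucc).comap (s i.succ).subtype) ≃ₗ[B]
        (↥(t (σ i).succ) ⧸ (t (σ i).castSucc).comap (t (σ i).succ).subtype))

/-- A torsion class in `mod B`: a class of modules closed under factor modules and
extensions. -/
def IsTorsionClass (B : Type u) [Ring B] (T : Set (ModA B)) : Prop :=
  (∀ M ∈ T, ∀ (N : ModA B) (g : M.M →ₗ[B] N.M), Function.Surjective g → N ∈ T) ∧
  ∀ (X E M : ModA B) (f : X.M →ₗ[B] E.M) (g : E.M →ₗ[B] M.M),
    Function.Injective f → Function.Surjective g → LinearMap.range f = LinearMap.ker g →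
    X ∈ T → M ∈ T → E ∈ T

/-- A torsion class is functorially finite iff it is of the form `Fac(M)`. -/
def IsFunctoriallyFinite (B : Type u) [Ring B] (T : Set (ModA B)) : Prop :=
  ∃ M : ModA B,
    T = {N | ∃ (k : ℕ) (g : (Fin k → M.M) →ₗ[B] N.M), Function.Surjective g}

/-- A module `M` is `τ`-rigid if `Hom(M, τM) = 0`. -/
def IsTauRigid {B : Type u} [Ring B] (M : ModA B) : Prop :=
  ∀ N : ModA B, IsTauOf N M → ∀ f : M.M →ₗ[B] N.M, f = 0

/-- A module `M` is rigid if `Ext¹(M, M) = 0`. -/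
def IsRigid {B : Type u} [Ring B] (M : ModA B) : Prop := Ext1IsZero B M.M M.M

/-- `α(M) ≤ 2`: the middle term of any almost split sequence ending at `M` has at most
two indecomposable direct summands. -/
def AlphaLe2 {B : Type u} [Ring B] (M : ModA B) : Prop :=
  ∀ s : AlmostSplitSeq B, s.r.Iso M →
    ∀ (k : ℕ) (N : Fin k → Submodule B s.m.M),
      (∀ i, IsIndecMod B ↥(N i)) → iSupIndep N → (⨆ i, N i) = ⊤ → k ≤ 2

namespace CFC

section Basic

variable {R : Type u} [Ring R]

instance noethInst (X : ModA R) : IsNoetherian R X.M :=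
  (isFiniteLength_iff_isNoetherian_isArtinian.mp X.finLen).1

instance artinInst (X : ModA R) : IsArtinian R X.M :=
  (isFiniteLength_iff_isNoetherian_isArtinian.mp X.finLen).2

/-- Bundle a noetherian and artinian module. -/
@[reducible] def mkM (R : Type u) [Ring R] (M : Type u) [AddCommGroup M] [Module R M]
    [IsNoetherian R M] [IsArtinian R M] : ModA R :=
  { M := M, finLen := isFiniteLength_iff_isNoetherian_isArtinian.mpr ⟨‹_›, ‹_›⟩ }

/-- A split monomorphism from a nonzero module into an indecomposable one is bijective. -/
lemma bij_of_splitMono {W X : ModA R} (hW : W.IsIndec) (hX : X.IsIndec)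
    (k : W.M →ₗ[R] X.M) (r : X.M →ₗ[R] W.M) (h : r.comp k = LinearMap.id) :
    Function.Bijective k := by
  have hrk : ∀ w, r (k w) = w := fun w => by
    have := LinearMap.congr_fun h w
    simpa using this
  refine ⟨fun a b hab => by rw [← hrk a, ← hrk b, hab], ?_⟩
  rcases hX.2 (k.comp r) (by ext x; simp [hrk]) with h0 | h1
  · exfalso
    obtain ⟨w, hw⟩ := @exists_ne _ hW.1 (0 : W.M)
    apply hw
    have := LinearMap.congr_fun h0 (k w)
    simp [hrk] at this
    rw [← hrk w, this, map_zero]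
  · intro x
    exact ⟨r x, by simpa using LinearMap.congr_fun h1 x⟩

lemma bij_of_splitEpi {W X : ModA R} (hW : W.IsIndec) (hX : X.IsIndec)
    (r : X.M →ₗ[R] W.M) (k : W.M →ₗ[R] X.M) (h : r.comp k = LinearMap.id) :
    Function.Bijective r := by
  have hk := bij_of_splitMono hW hX k r h
  have hrk : ∀ w, r (k w) = w := fun w => by
    have := LinearMap.congr_fun h w
    simpa using this
  refine ⟨?_, fun w => ⟨k w, hrk w⟩⟩
  intro a b hab
  obtain ⟨a', rfl⟩ := hk.2 a
  obtain ⟨b', rfl⟩ := hk.2 b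
  rw [hrk, hrk] at hab
  rw [hab]

lemma splitMono_of_bij {X Y : ModA R} (f : X.M →ₗ[R] Y.M) (h : Function.Bijective f) :
    SplitMonoMap f :=
  ⟨(LinearEquiv.ofBijective f h).symm.toLinearMap, by
    ext x
    exact (LinearEquiv.ofBijective f h).symm_apply_apply x⟩

lemma splitEpi_of_bij {X Y : ModA R} (f : X.M →ₗ[R] Y.M) (h : Function.Bijective f) :
    SplitEpiMap f :=
  ⟨(LinearEquiv.ofBijective f h).symm.toLinearMap, by
    ext x
    exact (LinearEquiv.ofBijective f h).apply_symm_apply x⟩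

/-- If `h ∘ g` is bijective then `g` is a split mono. -/
lemma splitMono_of_comp_bij {X Y Z : ModA R} (g : X.M →ₗ[R] Y.M) (h : Y.M →ₗ[R] Z.M)
    (hb : Function.Bijective (h.comp g)) : SplitMonoMap g := by
  obtain ⟨r, hr⟩ := splitMono_of_bij (X := X) (Y := Z) (h.comp g) hb
  exact ⟨r.comp h, by rw [LinearMap.comp_assoc]; exact hr⟩

lemma splitEpi_of_comp_bij {X Y Z : ModA R} (g : X.M →ₗ[R] Y.M) (h : Y.M →ₗ[R] Z.M)
    (hb : Function.Bijective (h.comp g)) : SplitEpiMap h := by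
  obtain ⟨r, hr⟩ := splitEpi_of_bij (X := X) (Y := Z) (h.comp g) hb
  exact ⟨g.comp r, by rw [← LinearMap.comp_assoc]; exact hr⟩

lemma inRad_of_not_splitMono {X Z : ModA R} (hX : X.IsIndec) (g : X.M →ₗ[R] Z.M)
    (hg : ¬SplitMonoMap g) : InRad g := by
  intro W hW k h hb
  obtain ⟨r, hr⟩ := splitMono_of_comp_bij (X := W) (Y := X) (Z := W) k (h.comp g)
    (by rwa [LinearMap.comp_assoc])
  have hk := bij_of_splitMono hW hX k r hr
  apply hg
  apply splitMono_of_comp_bij (X := X) (Y := Z) (Z := W) g h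
  have : Function.Bijective ((h.comp g) ∘ k) := hb
  exact (Function.Bijective.of_comp_iff _ hk).mp this

lemma inRad_of_not_splitEpi {X Y : ModA R} (hY : Y.IsIndec) (h : X.M →ₗ[R] Y.M)
    (hh : ¬SplitEpiMap h) : InRad h := by
  intro W hW k l hb
  obtain ⟨r, hr⟩ := splitEpi_of_comp_bij (X := W) (Y := Y) (Z := W) (h.comp k) l hb
  have hl := bij_of_splitEpi hW hY l r hr
  apply hh
  apply splitEpi_of_comp_bij (X := W) (Y := X) (Z := Y) k h
  have : Function.Bijective (l ∘ (h.comp k)) := hb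
  exact (Function.Bijective.of_comp_iff' hl _).mp this

lemma inRad_of_not_bij {X Y : ModA R} (hX : X.IsIndec) (hY : Y.IsIndec) (f : X.M →ₗ[R] Y.M)
    (hf : ¬Function.Bijective f) : InRad f :=
  inRad_of_not_splitMono hX f fun ⟨r, hr⟩ => hf (bij_of_splitMono hX hY f r hr)

lemma not_splitMono_of_inRad {X Y : ModA R} (hX : X.IsIndec) (f : X.M →ₗ[R] Y.M)
    (hf : InRad f) : ¬SplitMonoMap f := by
  rintro ⟨r, hr⟩
  apply hf X hX LinearMap.id r
  rw [LinearMap.comp_id, hr]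
  exact Function.bijective_id

lemma not_splitEpi_of_inRad {X Y : ModA R} (hY : Y.IsIndec) (f : X.M →ₗ[R] Y.M)
    (hf : InRad f) : ¬SplitEpiMap f := by
  rintro ⟨r, hr⟩
  apply hf Y hY r LinearMap.id
  rw [LinearMap.id_comp, hr]
  exact Function.bijective_id

lemma inRad_comp_left {X Y Z : ModA R} {f : X.M →ₗ[R] Y.M} (hf : InRad f)
    (h : Y.M →ₗ[R] Z.M) : InRad (X := X) (Y := Z) (h.comp f) := by
  intro W hW k l hb
  exact hf W hW k (l.comp h) hb

lemma inRad_comp_right {X Y Z : ModA R} {f : Y.M →ₗ[R] Z.M} (hf : InRad f)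
    (h : X.M →ₗ[R] Y.M) : InRad (X := X) (Y := Z) (f.comp h) := by
  intro W hW k l hb
  exact hf W hW (h.comp k) l hb

lemma mem_radPow_succ {n : ℕ} {X Y Z : ModA R} {g : X.M →ₗ[R] Z.M} {h : Z.M →ₗ[R] Y.M}
    (hg : InRad g) (hh : h ∈ radPow R n Z Y) : h.comp g ∈ radPow R (n + 1) X Y :=
  AddSubgroup.subset_closure ⟨Z, g, h, hg, hh, rfl⟩

lemma radPow_comp_right (n : ℕ) {X Y Z : ModA R} (f : Y.M →ₗ[R] Z.M) (k : X.M →ₗ[R] Y.M)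
    (hf : f ∈ radPow R n Y Z) : f.comp k ∈ radPow R n X Z := by
  cases n with
  | zero => exact AddSubgroup.mem_top _
  | succ n =>
    induction hf using AddSubgroup.closure_induction with
    | mem f hf =>
      obtain ⟨W, g, h, hg, hh, rfl⟩ := hf
      exact AddSubgroup.subset_closure ⟨W, g.comp k, h, inRad_comp_right hg k, hh, rfl⟩
    | zero => rw [LinearMap.zero_comp]; exact AddSubgroup.zero_mem _
    | add a b _ _ ha hb => rw [LinearMap.add_comp]; exact AddSubgroup.add_mem _ ha hb
    | neg a _ ha => rw [LinearMap.neg_comp]; exact AddSubgroup.neg_mem _ ha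

/-- The identity of a finite length module is a sum of maps factoring through
indecomposable modules. -/
lemma id_mem_closure (n : ℕ) : ∀ (Z : ModA R), (Module.length R Z.M).toNat ≤ n →
    (LinearMap.id : Z.M →ₗ[R] Z.M) ∈ AddSubgroup.closure
      {f : Z.M →ₗ[R] Z.M | ∃ (W : ModA R) (p : Z.M →ₗ[R] W.M) (i : W.M →ₗ[R] Z.M),
        W.IsIndec ∧ f = i.comp p} := by
  induction n using Nat.strong_induction_on with
  | _ n ih =>
  intro Z hn
  by_cases hZ : Nontrivial Z.M
  swap
  · rw [not_nontrivial_iff_subsingleton] at hZ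
    have : (LinearMap.id : Z.M →ₗ[R] Z.M) = 0 := by ext x; exact Subsingleton.elim _ _
    rw [this]
    exact AddSubgroup.zero_mem _
  by_cases hind : Z.IsIndec
  · exact AddSubgroup.subset_closure ⟨Z, LinearMap.id, LinearMap.id, hind, rfl⟩
  have : ∃ θ : Module.End R Z.M, θ * θ = θ ∧ θ ≠ 0 ∧ θ ≠ 1 := by
    by_contra hcon
    push Not at hcon
    exact hind ⟨hZ, fun f hf => by
      by_cases h0 : f = 0
      · exact Or.inl h0
      · exact Or.inr (hcon f hf h0)⟩
  obtain ⟨θ, hθ, h0, h1⟩ := this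
  have key : ∀ φ : Module.End R Z.M, φ * φ = φ → φ ≠ 1 → (φ : Z.M →ₗ[R] Z.M) ∈
      AddSubgroup.closure
      {f : Z.M →ₗ[R] Z.M | ∃ (W : ModA R) (p : Z.M →ₗ[R] W.M) (i : W.M →ₗ[R] Z.M),
        W.IsIndec ∧ f = i.comp p} := by
    intro φ hφ hφ1
    let N : Submodule R Z.M := LinearMap.range φ
    have hφ' : ∀ x, φ (φ x) = φ x := fun x => LinearMap.congr_fun hφ x
    have hN : N < ⊤ := by
      rw [lt_top_iff_ne_top]
      intro htop
      apply hφ1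
      ext x
      obtain ⟨y, rfl⟩ := LinearMap.range_eq_top.mp htop x
      simp [hφ']
    have hlt : Module.length R N < Module.length R Z.M := Submodule.length_lt hN.ne
    have hfin : Module.length R Z.M ≠ ⊤ := Module.length_ne_top
    have hlt' : (Module.length R N).toNat < (Module.length R Z.M).toNat := by
      have hN' : Module.length R N ≠ ⊤ := ne_top_of_lt hlt
      lift Module.length R N to ℕ using hN' with a
      lift Module.length R Z.M to ℕ using hfin with b
      simpa using hlt
    have hid := ih _ (lt_of_lt_of_le hlt' hn) (mkM R N) le_rfl
    have hφe : (φ : Z.M →ₗ[R] Z.M) = (N.subtype.comp LinearMap.id).comp φ.rangeRestrict := by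
      ext x; rfl
    rw [hφe]
    clear hφe
    generalize (LinearMap.id : N →ₗ[R] N) = t at hid ⊢
    induction hid using AddSubgroup.closure_induction with
    | mem f hf =>
      obtain ⟨W, p, i, hW, rfl⟩ := hf
      exact AddSubgroup.subset_closure ⟨W, p.comp φ.rangeRestrict, N.subtype.comp i, hW, rfl⟩
    | zero => rw [LinearMap.comp_zero, LinearMap.zero_comp]; exact AddSubgroup.zero_mem _
    | add a b _ _ ha hb =>
      rw [LinearMap.comp_add, LinearMap.add_comp]; exact AddSubgroup.add_mem _ ha hb
    | neg a _ ha => rw [LinearMap.comp_neg, LinearMap.neg_comp]; exact AddSubgroup.neg_mem _ ha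
  have hsum : (LinearMap.id : Z.M →ₗ[R] Z.M) = θ + (1 - θ) := by
    ext x; simp
  rw [hsum]
  refine AddSubgroup.add_mem _ (key θ hθ h1) (key (1 - θ) ?_ ?_)
  · rw [sub_mul, mul_sub, mul_sub, hθ]; simp
  · intro h; apply h0; simpa using h

lemma mk_eq_of_bij {X Y : IndecModA R} (f : X.1.M →ₗ[R] Y.1.M) (hf : Function.Bijective f) :
    ARVertex.mk X = ARVertex.mk Y :=
  Quotient.sound ⟨LinearEquiv.ofBijective f hf⟩

/-- A map in `rad^n` but not in `rad^(n+1)`, between indecomposables, gives a path of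
irreducible maps. -/
lemma path_of_radPow (n : ℕ) : ∀ (X Y : IndecModA R) (f : X.1.M →ₗ[R] Y.1.M),
    f ∈ radPow R n X.1 Y.1 → f ∉ radPow R (n + 1) X.1 Y.1 →
    Relation.ReflTransGen ARArrow (ARVertex.mk X) (ARVertex.mk Y) := by
  induction n with
  | zero =>
    intro X Y f _ hf
    have hb : Function.Bijective f := by
      by_contra hb
      apply hf
      have := mem_radPow_succ (n := 0) (g := f) (h := LinearMap.id)
        (inRad_of_not_bij X.2 Y.2 f hb) (AddSubgroup.mem_top _)
      simpa using this
    rw [mk_eq_of_bij f hb]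
  | succ n ih =>
    intro X Y f hf hf'
    -- find a non-`rad^(n+2)` composite through an indecomposable
    have : ∃ (W : ModA R) (g : X.1.M →ₗ[R] W.M) (h : W.M →ₗ[R] Y.1.M), W.IsIndec ∧ InRad g ∧
        h ∈ radPow R n W Y.1 ∧ h.comp g ∉ radPow R (n + 2) X.1 Y.1 := by
      by_contra hcon
      push Not at hcon
      apply hf'
      refine (AddSubgroup.closure_le _).mpr ?_ hf
      rintro _ ⟨Z, g, h, hg, hh, rfl⟩
      have hid := id_mem_closure _ Z le_rfl
      have he : h.comp g = (h.comp LinearMap.id).comp g := rfl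
      rw [he]
      clear he
      generalize (LinearMap.id : Z.M →ₗ[R] Z.M) = t at hid ⊢
      induction hid using AddSubgroup.closure_induction with
      | mem k hk =>
        obtain ⟨W, p, i, hW, rfl⟩ := hk
        exact hcon W (p.comp g) (h.comp i) hW (inRad_comp_left hg p) (radPow_comp_right n h i hh)
      | zero => rw [LinearMap.comp_zero, LinearMap.zero_comp]; exact AddSubgroup.zero_mem _
      | add a b _ _ ha hb =>
        rw [LinearMap.comp_add, LinearMap.add_comp]; exact AddSubgroup.add_mem _ ha hb
      | neg a _ ha =>
        rw [LinearMap.comp_neg, LinearMap.neg_comp]; exact AddSubgroup.neg_mem _ ha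
    obtain ⟨W, g, h, hW, hg, hh, hn⟩ := this
    have h1 := ih ⟨W, hW⟩ Y h hh fun hh' => hn (mem_radPow_succ hg hh')
    refine Relation.ReflTransGen.head ?_ h1
    refine ⟨X, ⟨W, hW⟩, g, ⟨not_splitMono_of_inRad X.2 g hg, not_splitEpi_of_inRad hW g hg, ?_⟩,
      rfl, rfl⟩
    intro Z v w hvw
    by_contra hcon
    push Not at hcon
    apply hn
    rw [← hvw, ← LinearMap.comp_assoc]
    exact mem_radPow_succ (inRad_of_not_splitMono X.2 v hcon.1)
      (mem_radPow_succ (inRad_of_not_splitEpi hW w hcon.2) hh)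

lemma path_of_not_radInf (X Y : IndecModA R) (f : X.1.M →ₗ[R] Y.1.M) (hf : ¬InRadInf f) :
    Relation.ReflTransGen ARArrow (ARVertex.mk X) (ARVertex.mk Y) := by
  classical
  unfold InRadInf at hf
  push Not at hf
  have h0 : Nat.find hf ≠ 0 := by
    intro h
    have := Nat.find_spec hf
    rw [h] at this
    exact this (AddSubgroup.mem_top _)
  obtain ⟨n, hn⟩ := Nat.exists_eq_succ_of_ne_zero h0
  have h1 := Nat.find_spec hf
  have h2 := Nat.find_min hf (m := n) (by omega)
  rw [hn] at h1
  exact path_of_radPow n X Y f (not_not.mp h2) h1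

end Basic

end CFC

namespace CFC

section Keys

variable {R : Type u} [Ring R]

/-- Factor a map through a surjection. -/
lemma exists_factor {Q W Z : Type u} [AddCommGroup Q] [Module R Q] [AddCommGroup W] [Module R W]
    [AddCommGroup Z] [Module R Z] (q : Q →ₗ[R] W) (k : Q →ₗ[R] Z) (hq : Function.Surjective q)
    (hk : ∀ x, q x = 0 → k x = 0) : ∃ ζ : W →ₗ[R] Z, ∀ x, ζ (q x) = k x := by
  refine ⟨((LinearMap.ker q).liftQ k fun x hx => hk x hx).comp
    (q.quotKerEquivOfSurjective hq).symm.toLinearMap, fun x => ?_⟩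
  have : (q.quotKerEquivOfSurjective hq).symm (q x) = (LinearMap.ker q).mkQ x := by
    rw [LinearEquiv.symm_apply_eq]; rfl
  rw [LinearMap.comp_apply, LinearEquiv.coe_coe, this]
  rfl

/-- Factor a map through an injection. -/
lemma exists_cofactor {Q W Z : Type u} [AddCommGroup Q] [Module R Q] [AddCommGroup W]
    [Module R W] [AddCommGroup Z] [Module R Z] (q : W →ₗ[R] Q) (k : Z →ₗ[R] Q)
    (hq : Function.Injective q) (hk : ∀ z, ∃ w, q w = k z) :
    ∃ ζ : Z →ₗ[R] W, ∀ z, q (ζ z) = k z := by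
  refine ⟨(LinearEquiv.ofInjective q hq).symm.toLinearMap.comp
    (k.codRestrict (LinearMap.range q) fun z => hk z), fun z => ?_⟩
  have := (LinearEquiv.ofInjective q hq).apply_symm_apply
    (k.codRestrict (LinearMap.range q) (fun z => hk z) z)
  exact congrArg Subtype.val this

/-- Pushout argument replacing the inverse Auslander-Reiten translation. -/
lemma key_mono {X Y Z W : ModA R} (f : X.M →ₗ[R] Y.M) (hf : IsIrred f)
    (hns : ¬Function.Surjective f) (a : X.M →ₗ[R] Z.M)
    (ha : ¬∃ v : Y.M →ₗ[R] Z.M, v.comp f = a) (g : Z.M →ₗ[R] W.M) (hg : IsIrred g)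
    (hga : g.comp a = 0) : ∃ v : Y.M →ₗ[R] W.M, v ≠ 0 := by
  have hga' : ∀ x, g (a x) = 0 := fun x => LinearMap.congr_fun hga x
  let D : Submodule R (Y.M × Z.M) := LinearMap.range (f.prod (-a))
  let j : Z.M →ₗ[R] ((Y.M × Z.M) ⧸ D) := D.mkQ.comp (LinearMap.inr R Y.M Z.M)
  let g' : ((Y.M × Z.M) ⧸ D) →ₗ[R] W.M := D.liftQ (g.comp (LinearMap.snd R Y.M Z.M)) (by
    rintro _ ⟨x, rfl⟩
    simp [hga'])
  have hj : ¬SplitMonoMap (X := Z) (Y := mkM R ((Y.M × Z.M) ⧸ D)) j := by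
    rintro ⟨r, hr⟩
    apply ha
    refine ⟨r.comp (D.mkQ.comp (LinearMap.inl R Y.M Z.M)), ?_⟩
    ext x
    have h1 : D.mkQ (f x, 0) = D.mkQ (0, a x) := by
      rw [← sub_eq_zero, ← map_sub]
      refine (Submodule.Quotient.mk_eq_zero D).mpr ⟨x, ?_⟩
      simp
    have h2 := LinearMap.congr_fun hr (a x)
    change r (D.mkQ (0, a x)) = a x at h2
    change r (D.mkQ (f x, 0)) = a x
    rw [h1, h2]
  obtain ⟨s, hs⟩ : SplitEpiMap (X := mkM R ((Y.M × Z.M) ⧸ D)) (Y := W) g' := by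
    refine (hg.2.2 (mkM R ((Y.M × Z.M) ⧸ D)) j g' ?_).resolve_left hj
    ext z
    rfl
  have hs' : ∀ w, g' (s w) = w := fun w => LinearMap.congr_fun hs w
  let Q : Submodule R (Y.M × Z.M × W.M) := LinearMap.ker
    (D.mkQ.comp ((LinearMap.fst R Y.M (Z.M × W.M)).prod
      ((LinearMap.fst R Z.M W.M).comp (LinearMap.snd R Y.M (Z.M × W.M)))) -
      s.comp ((LinearMap.snd R Z.M W.M).comp (LinearMap.snd R Y.M (Z.M × W.M))))
  have hQ : ∀ y z w, (y, z, w) ∈ Q ↔ D.mkQ (y, z) = s w := fun y z w => by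
    change D.mkQ (y, z) - s w = 0 ↔ _
    rw [sub_eq_zero]
  let ι : X.M →ₗ[R] Q := (f.prod ((-a).prod 0)).codRestrict Q (fun x => by
    change (f x, -a x, 0) ∈ Q
    rw [hQ, map_zero]
    exact (Submodule.Quotient.mk_eq_zero D).mpr ⟨x, rfl⟩)
  let p : Q →ₗ[R] Y.M := (LinearMap.fst R Y.M (Z.M × W.M)).comp Q.subtype
  rcases hf.2.2 (mkM R Q) ι p (by ext x; rfl) with ⟨ρ, hρ⟩ | ⟨σ, hσ⟩
  · exfalso
    have hρ' : ∀ x, ρ (ι x) = x := fun x => LinearMap.congr_fun hρ x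
    apply hg.2.1
    let q : Q →ₗ[R] W.M := ((LinearMap.snd R Z.M W.M).comp
      (LinearMap.snd R Y.M (Z.M × W.M))).comp Q.subtype
    let k : Q →ₗ[R] Z.M := ((LinearMap.fst R Z.M W.M).comp
      (LinearMap.snd R Y.M (Z.M × W.M))).comp Q.subtype + a.comp ρ
    have hq : Function.Surjective q := by
      intro w
      obtain ⟨⟨y, z⟩, hyz⟩ := D.mkQ_surjective (s w)
      exact ⟨⟨(y, z, w), (hQ y z w).mpr hyz⟩, rfl⟩
    obtain ⟨ζ, hζ⟩ := exists_factor q k hq (by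
      rintro ⟨⟨y, z, w⟩, h⟩ h0
      change w = 0 at h0
      subst h0
      have h1 := (hQ _ _ _).mp h
      rw [map_zero] at h1
      obtain ⟨x, hx⟩ := (Submodule.Quotient.mk_eq_zero D).mp h1
      have hx1 : f x = y := congrArg Prod.fst hx
      have hx2 : -a x = z := congrArg Prod.snd hx
      have : (⟨(y, z, 0), h⟩ : Q) = ι x := by
        apply Subtype.ext
        change (y, z, (0 : W.M)) = (f x, -a x, 0)
        rw [hx1, hx2]
      change z + a (ρ ⟨(y, z, 0), h⟩) = 0
      rw [this, hρ', ← hx2]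
      simp)
    refine ⟨ζ, ?_⟩
    ext w
    obtain ⟨⟨⟨y, z, w'⟩, h⟩, rfl⟩ := hq w
    change g (ζ (q ⟨(y, z, w'), h⟩)) = w'
    rw [hζ]
    change g (z + a (ρ ⟨(y, z, w'), h⟩)) = w'
    rw [map_add, hga', add_zero, ← hs' w', ← (hQ _ _ _).mp h]
    rfl
  · refine ⟨((LinearMap.snd R Z.M W.M).comp
      (LinearMap.snd R Y.M (Z.M × W.M))).comp (Q.subtype.comp σ), ?_⟩
    intro h0
    apply hns
    intro y
    have h1 := (hQ _ _ _).mp (σ y).2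
    have h2 : (σ y).1.2.2 = 0 := LinearMap.congr_fun h0 y
    have h3 : (σ y).1.1 = y := LinearMap.congr_fun hσ y
    rw [h2, map_zero] at h1
    obtain ⟨x, hx⟩ := (Submodule.Quotient.mk_eq_zero D).mp h1
    exact ⟨x, (congrArg Prod.fst hx).trans h3⟩

/-- Pullback argument replacing the Auslander-Reiten translation. -/
lemma key_epi {X Y Z W : ModA R} (f : X.M →ₗ[R] Y.M) (hf : IsIrred f)
    (hns : ¬Function.Injective f) (b : Z.M →ₗ[R] Y.M)
    (hb : ¬∃ v : Z.M →ₗ[R] X.M, f.comp v = b) (g : W.M →ₗ[R] Z.M) (hg : IsIrred g)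
    (hbg : b.comp g = 0) : ∃ v : W.M →ₗ[R] X.M, v ≠ 0 := by
  have hbg' : ∀ x, b (g x) = 0 := fun x => LinearMap.congr_fun hbg x
  let D : Submodule R (X.M × Z.M) := LinearMap.ker
    (f.comp (LinearMap.fst R X.M Z.M) - b.comp (LinearMap.snd R X.M Z.M))
  have hD : ∀ x z, (x, z) ∈ D ↔ f x = b z := fun x z => by
    change f x - b z = 0 ↔ _
    rw [sub_eq_zero]
  let p : D →ₗ[R] Z.M := (LinearMap.snd R X.M Z.M).comp D.subtype
  let g' : W.M →ₗ[R] D := (LinearMap.inr R X.M Z.M |>.comp g).codRestrict D (fun w => by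
    change (0, g w) ∈ D
    rw [hD, map_zero, hbg'])
  have hp : ¬SplitEpiMap (X := mkM R D) (Y := Z) p := by
    rintro ⟨s, hs⟩
    apply hb
    refine ⟨(LinearMap.fst R X.M Z.M).comp (D.subtype.comp s), ?_⟩
    ext z
    have h1 := (hD _ _).mp (s z).2
    have h2 : (s z).1.2 = z := LinearMap.congr_fun hs z
    rw [h2] at h1
    exact h1
  obtain ⟨r, hr⟩ : SplitMonoMap (X := W) (Y := mkM R D) g' := by
    refine (hg.2.2 (mkM R D) g' p ?_).resolve_right hp
    ext w
    rfl
  have hr' : ∀ w, r (g' w) = w := fun w => LinearMap.congr_fun hr w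
  let N : Submodule R (X.M × Z.M × W.M) := LinearMap.range
    (((LinearMap.fst R X.M Z.M).comp D.subtype).prod
      (((LinearMap.snd R X.M Z.M).comp D.subtype).prod (-r)))
  have hN : ∀ d : D, (d.1.1, d.1.2, -r d) ∈ N := fun d => ⟨d, rfl⟩
  let q : ((X.M × Z.M × W.M) ⧸ N) →ₗ[R] Y.M := N.liftQ
    (f.comp (LinearMap.fst R X.M (Z.M × W.M)) -
      b.comp ((LinearMap.fst R Z.M W.M).comp (LinearMap.snd R X.M (Z.M × W.M)))) (by
      rintro _ ⟨d, rfl⟩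
      change f d.1.1 - b d.1.2 = 0
      rw [sub_eq_zero]
      exact (hD _ _).mp d.2)
  have hq : ∀ x z w, q (N.mkQ (x, z, w)) = f x - b z := fun _ _ _ => rfl
  let i : X.M →ₗ[R] ((X.M × Z.M × W.M) ⧸ N) := N.mkQ.comp (LinearMap.inl R X.M (Z.M × W.M))
  let l : W.M →ₗ[R] ((X.M × Z.M × W.M) ⧸ N) :=
    N.mkQ.comp ((LinearMap.inr R X.M (Z.M × W.M)).comp (LinearMap.inr R Z.M W.M))
  have hDl : ∀ (d : D) (w : W.M), N.mkQ (d.1.1, d.1.2, w) = l (w + r d) := fun d w => by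
    change N.mkQ (d.1.1, d.1.2, w) = N.mkQ (0, 0, w + r d)
    rw [← sub_eq_zero, ← map_sub]
    refine (Submodule.Quotient.mk_eq_zero N).mpr ?_
    convert hN d using 1
    simp
  rcases hf.2.2 (mkM R ((X.M × Z.M × W.M) ⧸ N)) i q (by
    ext x
    change q (N.mkQ (x, 0, 0)) = f x
    rw [hq, map_zero, sub_zero]) with ⟨ρ, hρ⟩ | ⟨σ, hσ⟩
  · have hρ' : ∀ x, ρ (i x) = x := fun x => LinearMap.congr_fun hρ x
    refine ⟨ρ.comp l, ?_⟩
    intro h0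
    apply hns
    rw [injective_iff_map_eq_zero]
    intro x hx
    have hd : (x, (0 : Z.M)) ∈ D := by rw [hD, hx, map_zero]
    have h1 := hDl ⟨_, hd⟩ 0
    have h2 : i x = l (0 + r ⟨_, hd⟩) := h1
    rw [← hρ' x, h2]
    exact LinearMap.congr_fun h0 _
  · exfalso
    have hσ' : ∀ y, q (σ y) = y := fun y => LinearMap.congr_fun hσ y
    apply hg.1
    let k : Z.M →ₗ[R] ((X.M × Z.M × W.M) ⧸ N) :=
      N.mkQ.comp ((LinearMap.inr R X.M (Z.M × W.M)).comp (LinearMap.inl R Z.M W.M)) + σ.comp b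
    have hl : Function.Injective l := by
      rw [injective_iff_map_eq_zero]
      intro w hw
      obtain ⟨d, hd⟩ := (Submodule.Quotient.mk_eq_zero N).mp hw
      have h1 : d.1.1 = 0 := congrArg Prod.fst hd
      have h2 : d.1.2 = 0 := congrArg (fun t => t.2.1) hd
      have h3 : -r d = w := congrArg (fun t => t.2.2) hd
      have h4 : d = 0 := Subtype.ext (Prod.ext h1 h2)
      rw [← h3, h4, map_zero, neg_zero]
    obtain ⟨ζ, hζ⟩ := exists_cofactor l k hl (by
      intro z
      have hqk : q (k z) = 0 := by
        change q (N.mkQ (0, z, 0) + σ (b z)) = 0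
        rw [map_add, hσ', hq, map_zero]
        simp
      obtain ⟨⟨x, z', w⟩, hx⟩ := N.mkQ_surjective (k z)
      rw [← hx, hq, sub_eq_zero] at hqk
      exact ⟨w + r ⟨(x, z'), (hD _ _).mpr hqk⟩, by rw [← hx, ← hDl]⟩)
    refine ⟨ζ, ?_⟩
    ext w
    apply hl
    change l (ζ (g w)) = l w
    rw [hζ]
    change N.mkQ (0, g w, 0) + σ (b (g w)) = l w
    rw [hbg', map_zero, add_zero]
    have h1 := hDl (g' w) 0
    rw [hr', zero_add] at h1
    exact h1

/-- Fitting: an endomorphism of an indecomposable module is bijective or nilpotent. -/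
lemma bij_or_nilp {M : Type u} [AddCommGroup M] [Module R M] [IsNoetherian R M] [IsArtinian R M]
    (hM : IsIndecMod R M) (θ : Module.End R M) : Function.Bijective θ ∨ ∃ n, θ ^ n = 0 := by
  obtain ⟨n, hn⟩ := Filter.eventually_atTop.mp θ.eventually_isCompl_ker_pow_range_pow
  have hc := hn (n + 1) (Nat.le_succ n)
  let P := LinearMap.ker (θ ^ (n + 1))
  let Q := LinearMap.range (θ ^ (n + 1))
  have hc' : IsCompl P Q := hc
  let π : Module.End R M := P.subtype.comp (Submodule.projectionOnto P Q hc')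
  have hπ : π * π = π := by
    ext x
    exact congrArg Subtype.val (Submodule.projectionOnto_apply_left hc'
      (Submodule.projectionOnto P Q hc' x))
  rcases hM.2 π hπ with h | h
  · left
    have hP : P = ⊥ := by
      rw [eq_bot_iff]
      intro x hx
      have h1 := LinearMap.congr_fun h x
      have h2 : π x = x := congrArg Subtype.val
        (Submodule.projectionOnto_apply_left hc' ⟨x, hx⟩)
      rw [h2] at h1
      simpa using h1
    have hinj : Function.Injective θ := by
      rw [← LinearMap.ker_eq_bot, eq_bot_iff, ← hP]
      intro x hx
      change (θ ^ (n + 1)) x = 0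
      rw [pow_succ, Module.End.mul_apply, LinearMap.mem_ker.mp hx, map_zero]
    exact IsArtinian.bijective_of_injective_endomorphism θ hinj
  · right
    refine ⟨n + 1, ?_⟩
    ext x
    have h1 := LinearMap.congr_fun h x
    have h2 : x ∈ P := by
      rw [← show π x = x from h1]
      exact (Submodule.projectionOnto P Q hc' x).2
    exact h2

end Keys

end CFC

namespace CFC

section Reach

variable {R : Type u} [Ring R]

/-- A nonzero nonisomorphism between indecomposable modules, on the level of vertices. -/
def HStep (x y : ARVertex R) : Prop :=
  ∃ (X Y : IndecModA R) (f : X.1.M →ₗ[R] Y.1.M), f ≠ 0 ∧ ¬Function.Bijective f ∧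
    ARVertex.mk X = x ∧ ARVertex.mk Y = y

/-- Reachability by paths of nonzero maps between indecomposable modules. -/
abbrev Reach (x y : ARVertex R) : Prop := Relation.ReflTransGen HStep x y

lemma reach_of_ne_zero {X Y : IndecModA R} (f : X.1.M →ₗ[R] Y.1.M) (hf : f ≠ 0) :
    Reach (ARVertex.mk X) (ARVertex.mk Y) := by
  by_cases hb : Function.Bijective f
  · rw [mk_eq_of_bij f hb]
  · exact Relation.ReflTransGen.single ⟨X, Y, f, hf, hb, rfl, rfl⟩

lemma exists_mk (x : ARVertex R) : ∃ X : IndecModA R, ARVertex.mk X = x := Quotient.exists_rep x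

lemma iso_of_mk_eq {X Y : IndecModA R} (h : ARVertex.mk X = ARVertex.mk Y) :
    Nonempty (X.1.M ≃ₗ[R] Y.1.M) := Quotient.exact h

lemma irred_conj {X Y X' Y' : ModA R} (f : X.M →ₗ[R] Y.M) (hf : IsIrred f)
    (e : X'.M ≃ₗ[R] X.M) (e' : Y.M ≃ₗ[R] Y'.M) :
    IsIrred (X := X') (Y := Y') (e'.toLinearMap.comp (f.comp e.toLinearMap)) := by
  refine ⟨?_, ?_, ?_⟩
  · rintro ⟨r, hr⟩
    refine hf.1 ⟨e.toLinearMap.comp (r.comp e'.toLinearMap), ?_⟩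
    ext x
    have := LinearMap.congr_fun hr (e.symm x)
    simp at this
    simp [this]
  · rintro ⟨r, hr⟩
    refine hf.2.1 ⟨e.toLinearMap.comp (r.comp e'.toLinearMap), ?_⟩
    ext x
    have := LinearMap.congr_fun hr (e' x)
    simp at this
    simp [this]
  · intro Z g h hgh
    have hgh' : ∀ x, h (g x) = e' (f (e x)) := fun x => LinearMap.congr_fun hgh x
    rcases hf.2.2 Z (g.comp e.symm.toLinearMap) (e'.symm.toLinearMap.comp h) (by
      ext x
      simp [hgh']) with ⟨r, hr⟩ | ⟨r, hr⟩
    · left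
      refine ⟨e.symm.toLinearMap.comp r, ?_⟩
      ext x
      have := LinearMap.congr_fun hr (e x)
      simp at this
      simp [this]
    · right
      refine ⟨r.comp e'.symm.toLinearMap, ?_⟩
      ext x
      have := LinearMap.congr_fun hr (e'.symm x)
      simp only [LinearMap.comp_apply, LinearEquiv.coe_coe, LinearMap.id_apply,
        LinearEquiv.symm_apply_eq, LinearEquiv.apply_symm_apply] at this
      simp [this]

lemma irred_of_arrow {X Y : IndecModA R} (h : ARArrow (ARVertex.mk X) (ARVertex.mk Y)) :
    ∃ f : X.1.M →ₗ[R] Y.1.M, IsIrred f := by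
  obtain ⟨X', Y', f, hf, hX, hY⟩ := h
  obtain ⟨e⟩ := iso_of_mk_eq hX.symm
  obtain ⟨e'⟩ := iso_of_mk_eq hY
  exact ⟨_, irred_conj f hf e e'⟩

lemma irred_not_bij {X Y : ModA R} (f : X.M →ₗ[R] Y.M) (hf : IsIrred f) :
    ¬Function.Bijective f := fun h => hf.1 (splitMono_of_bij f h)

lemma irred_ne_zero {X Y : IndecModA R} (f : X.1.M →ₗ[R] Y.1.M) (hf : IsIrred f) : f ≠ 0 := by
  rintro rfl
  rcases hf.2.2 (mkM R PUnit.{u + 1}) 0 0 (by ext x; rfl) with ⟨r, hr⟩ | ⟨r, hr⟩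
  · obtain ⟨x, hx⟩ := @exists_ne _ X.2.1 (0 : X.1.M)
    apply hx
    have := LinearMap.congr_fun hr x
    simpa using this.symm
  · obtain ⟨x, hx⟩ := @exists_ne _ Y.2.1 (0 : Y.1.M)
    apply hx
    have := LinearMap.congr_fun hr x
    simpa using this.symm

lemma hstep_of_arrow {x y : ARVertex R} (h : ARArrow x y) : HStep x y := by
  obtain ⟨X, Y, f, hf, hX, hY⟩ := h
  exact ⟨X, Y, f, irred_ne_zero f hf, irred_not_bij f hf, hX, hY⟩

lemma reach_of_arrow_mono {X Y : IndecModA R} (f : X.1.M →ₗ[R] Y.1.M) (hf : IsIrred f)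
    (hns : ¬Function.Surjective f) (hX : OnARCycle (ARVertex.mk X)) :
    Reach (ARVertex.mk Y) (ARVertex.mk X) := by
  by_contra hno
  have step : ∀ (Z W : IndecModA R) (a : X.1.M →ₗ[R] Z.1.M) (g : Z.1.M →ₗ[R] W.1.M),
      IsIrred g → Reach (ARVertex.mk W) (ARVertex.mk X) →
      (¬∃ v : Y.1.M →ₗ[R] Z.1.M, v.comp f = a) →
      ¬∃ v : Y.1.M →ₗ[R] W.1.M, v.comp f = g.comp a := by
    rintro Z W a g hg hW ha ⟨v, hv⟩
    have hz : ∀ v : Y.1.M →ₗ[R] W.1.M, v = 0 := by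
      intro v
      by_contra hv0
      exact hno ((reach_of_ne_zero v hv0).trans hW)
    rw [hz v, LinearMap.zero_comp] at hv
    obtain ⟨v', hv'⟩ := key_mono f hf hns a ha g hg hv.symm
    exact hv' (hz v')
  have main : ∀ z, Relation.TransGen ARArrow (ARVertex.mk X) z →
      ∀ Z : IndecModA R, ARVertex.mk Z = z → Reach (ARVertex.mk Z) (ARVertex.mk X) →
      ∃ h : X.1.M →ₗ[R] Z.1.M, ¬SplitMonoMap h ∧
        ∀ a : X.1.M →ₗ[R] X.1.M, (¬∃ v : Y.1.M →ₗ[R] X.1.M, v.comp f = a) →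
          ¬∃ v : Y.1.M →ₗ[R] Z.1.M, v.comp f = h.comp a := by
    intro z hz
    induction hz with
    | single h =>
      rintro Z rfl hZ
      obtain ⟨g, hg⟩ := irred_of_arrow h
      exact ⟨g, hg.1, fun a ha => step X Z a g hg hZ ha⟩
    | tail _ hbc ih =>
      rintro Z rfl hZ
      rename_i b _
      obtain ⟨B, rfl⟩ := exists_mk b
      obtain ⟨h, hh, hp⟩ := ih B rfl
        ((Relation.ReflTransGen.single (hstep_of_arrow hbc)).trans hZ)
      obtain ⟨g, hg⟩ := irred_of_arrow hbc
      refine ⟨g.comp h, ?_, fun a ha => ?_⟩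
      · rintro ⟨r, hr⟩
        exact hh ⟨r.comp g, hr⟩
      · exact step B Z (h.comp a) g hg hZ (hp a ha)
  obtain ⟨θ, hθ, hp⟩ := main _ hX X rfl Relation.ReflTransGen.refl
  rcases bij_or_nilp X.2 θ with hb | ⟨n, hn⟩
  · exact hθ (splitMono_of_bij θ hb)
  · have hpow : ∀ n : ℕ, ¬∃ v : Y.1.M →ₗ[R] X.1.M, v.comp f = ((θ : Module.End R X.1.M) ^ n) := by
      intro n
      induction n with
      | zero =>
        rintro ⟨v, hv⟩
        exact hf.1 ⟨v, hv⟩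
      | succ n ih =>
        rw [pow_succ']
        exact hp _ ih
    exact hpow n ⟨0, by rw [hn, LinearMap.zero_comp]⟩

lemma reach_of_arrow_epi {X Y : IndecModA R} (f : X.1.M →ₗ[R] Y.1.M) (hf : IsIrred f)
    (hns : ¬Function.Injective f) (hY : OnARCycle (ARVertex.mk Y)) :
    Reach (ARVertex.mk Y) (ARVertex.mk X) := by
  by_contra hno
  have step : ∀ (Z W : IndecModA R) (b : Z.1.M →ₗ[R] Y.1.M) (g : W.1.M →ₗ[R] Z.1.M),
      IsIrred g → Reach (ARVertex.mk Y) (ARVertex.mk W) →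
      (¬∃ v : Z.1.M →ₗ[R] X.1.M, f.comp v = b) →
      ¬∃ v : W.1.M →ₗ[R] X.1.M, f.comp v = b.comp g := by
    rintro Z W b g hg hW hb ⟨v, hv⟩
    have hz : ∀ v : W.1.M →ₗ[R] X.1.M, v = 0 := by
      intro v
      by_contra hv0
      exact hno (hW.trans (reach_of_ne_zero v hv0))
    rw [hz v, LinearMap.comp_zero] at hv
    obtain ⟨v', hv'⟩ := key_epi f hf hns b hb g hg hv.symm
    exact hv' (hz v')
  have main : ∀ z, Relation.TransGen ARArrow z (ARVertex.mk Y) →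
      ∀ Z : IndecModA R, ARVertex.mk Z = z → Reach (ARVertex.mk Y) (ARVertex.mk Z) →
      ∃ h : Z.1.M →ₗ[R] Y.1.M, ¬SplitEpiMap h ∧
        ∀ b : Y.1.M →ₗ[R] Y.1.M, (¬∃ v : Y.1.M →ₗ[R] X.1.M, f.comp v = b) →
          ¬∃ v : Z.1.M →ₗ[R] X.1.M, f.comp v = b.comp h := by
    intro z hz
    induction hz using Relation.TransGen.head_induction_on with
    | single h =>
      rintro Z rfl hZ
      obtain ⟨g, hg⟩ := irred_of_arrow h
      exact ⟨g, hg.2.1, fun b hb => step Y Z b g hg hZ hb⟩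
    | @head z c hzc _ ih =>
      rintro Z rfl hZ
      obtain ⟨B, rfl⟩ := exists_mk c
      obtain ⟨h, hh, hp⟩ := ih B rfl
        (hZ.trans (Relation.ReflTransGen.single (hstep_of_arrow hzc)))
      obtain ⟨g, hg⟩ := irred_of_arrow hzc
      refine ⟨h.comp g, ?_, fun b hb => ?_⟩
      · rintro ⟨r, hr⟩
        exact hh ⟨g.comp r, hr⟩
      · exact step B Z (b.comp h) g hg hZ (hp b hb)
  obtain ⟨θ, hθ, hp⟩ := main _ hY Y rfl Relation.ReflTransGen.refl
  rcases bij_or_nilp Y.2 θ with hb | ⟨n, hn⟩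
  · exact hθ (splitEpi_of_bij θ hb)
  · have hpow : ∀ n : ℕ, ¬∃ v : Y.1.M →ₗ[R] X.1.M, f.comp v = ((θ : Module.End R Y.1.M) ^ n) := by
      intro n
      induction n with
      | zero =>
        rintro ⟨v, hv⟩
        exact hf.2.1 ⟨v, hv⟩
      | succ n ih =>
        rw [pow_succ]
        exact hp _ ih
    exact hpow n ⟨0, by rw [hn, LinearMap.comp_zero]⟩

lemma reach_of_arrow {x y : ARVertex R} (h : ARArrow x y) (hx : OnARCycle x)
    (hy : OnARCycle y) : Reach y x := by
  obtain ⟨X, rfl⟩ := exists_mk x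
  obtain ⟨Y, rfl⟩ := exists_mk y
  obtain ⟨f, hf⟩ := irred_of_arrow h
  by_cases hs : Function.Surjective f
  · exact reach_of_arrow_epi f hf (fun hi => irred_not_bij f hf ⟨hi, hs⟩) hy
  · exact reach_of_arrow_mono f hf hs hx

lemma reach_of_step {x y : ARVertex R} (h : ARStep x y) (hx : OnARCycle x)
    (hy : OnARCycle y) : Reach x y := by
  rcases h with h | h
  · exact Relation.ReflTransGen.single (hstep_of_arrow h)
  · exact reach_of_arrow h hy hx

lemma reach_in_component {Γ : Set (ARVertex R)} (hΓ : IsCyclicComponent Γ) {x y : ARVertex R}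
    (hx : x ∈ Γ) (hy : y ∈ Γ) : Reach x y := by
  have h := hΓ.2.2.2 x hx y hy
  induction h with
  | refl => exact Relation.ReflTransGen.refl
  | tail hab hbc ih =>
    rename_i b c
    have hb : b ∈ Γ := by
      clear ih hbc hy
      induction hab with
      | refl => exact hx
      | tail _ hbc ih => exact hΓ.2.2.1 _ ih _ hbc.2.1 hbc.2.2
    exact (ih hb).trans (reach_of_step hbc.2.2 hbc.1 hbc.2.1)

lemma seq_of_rtg {α : Type*} {r : α → α → Prop} {a b : α} (h : Relation.ReflTransGen r a b) :
    ∃ (n : ℕ) (c : ℕ → α), c 0 = a ∧ c n = b ∧ ∀ k < n, r (c k) (c (k + 1)) := by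
  induction h with
  | refl => exact ⟨0, fun _ => a, rfl, rfl, fun k hk => absurd hk (Nat.not_lt_zero k)⟩
  | tail hab hbc ih =>
    rename_i b c
    obtain ⟨n, s, h0, hn, hs⟩ := ih
    refine ⟨n + 1, fun k => if k ≤ n then s k else c, by simp [h0], by simp, fun k hk => ?_⟩
    rcases Nat.lt_or_ge k n with h | h
    · have h1 : k ≤ n := h.le
      have h2 : k + 1 ≤ n := h
      simp only [h1, h2, if_true]
      exact hs k h
    · have h1 : k = n := by omega
      subst h1
      simp [hn, hbc]

/-- Maps on a cycle through a cycle-finite module yield paths of irreducible maps. -/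
lemma seq_cycle {X : IndecModA R} (hX : IsCycleFiniteModule X.1) (n : ℕ) (c : ℕ → ARVertex R)
    (hn : 0 < n) (h0 : c 0 = ARVertex.mk X) (hcn : c n = ARVertex.mk X)
    (hs : ∀ k < n, HStep (c k) (c (k + 1))) :
    ∀ k < n, Relation.ReflTransGen ARArrow (c k) (c (k + 1)) := by
  have hrep : ∀ x : ARVertex R, ARVertex.mk (Quotient.out x) = x := fun x => Quotient.out_eq x
  let o : ℕ → IndecModA R := fun k => Quotient.out (c k)
  have ho : ∀ k, ARVertex.mk (o k) = c k := fun k => hrep _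
  have hhom : ∀ k < n, ∃ f : (o k).1.M →ₗ[R] (o (k + 1)).1.M, f ≠ 0 ∧ ¬Function.Bijective f := by
    intro k hk
    obtain ⟨U, V, f, hf, hb, hU, hV⟩ := hs k hk
    obtain ⟨e⟩ := iso_of_mk_eq ((ho k).trans hU.symm)
    obtain ⟨e'⟩ := iso_of_mk_eq (hV.trans (ho (k + 1)).symm)
    refine ⟨e'.toLinearMap.comp (f.comp e.toLinearMap), ?_, ?_⟩
    · intro h
      apply hf
      ext x
      have := LinearMap.congr_fun h (e.symm x)
      simpa using this
    · intro h
      apply hb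
      have h' : Function.Bijective (e' ∘ (f ∘ e)) := h
      rw [Function.Bijective.of_comp_iff' e'.bijective,
        Function.Bijective.of_comp_iff _ e.bijective] at h'
      exact h'
  choose F hF0 hFb using hhom
  let cyc : ModCycle R :=
    { len := n
      len_pos := hn
      obj := fun i => (o i.1).1
      obj_indec := fun i => (o i.1).2
      closed := by
        change (o n).1 = (o 0).1
        have : o n = o 0 := by
          change Quotient.out (c n) = Quotient.out (c 0)
          rw [h0, hcn]
        rw [this]
      hom := fun i => F i.1 i.2
      hom_ne_zero := fun i => hF0 i.1 i.2
      hom_not_iso := fun i => hFb i.1 i.2 }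
  have hpass : cyc.Passes X.1 := ⟨0, iso_of_mk_eq ((ho 0).trans h0)⟩
  have hfin := hX.2 cyc hpass
  intro k hk
  have h1 : ¬InRadInf (F k hk) := hfin ⟨k, hk⟩
  have := path_of_not_radInf (o k) (o (k + 1)) (F k hk) h1
  rwa [ho, ho] at this

lemma arpath_of_step {X : IndecModA R} (hX : IsCycleFiniteModule X.1) {a b : ARVertex R}
    (h1 : Reach (ARVertex.mk X) a) (h : HStep a b) (h2 : Reach b (ARVertex.mk X)) :
    Relation.ReflTransGen ARArrow a b := by
  obtain ⟨n, c, hc0, hcn, hc⟩ := seq_of_rtg h1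
  obtain ⟨m, d, hd0, hdm, hd⟩ := seq_of_rtg h2
  have := seq_cycle hX (n + 1 + m) (fun k => if k ≤ n then c k else d (k - (n + 1))) (by omega)
    (by simp [hc0]) (by
      have : ¬ n + 1 + m ≤ n := by omega
      simp [this, hdm]) (by
      intro k hk
      rcases Nat.lt_trichotomy k n with h' | h' | h'
      · have h1 : k ≤ n := h'.le
        have h2 : k + 1 ≤ n := h'
        simp only [h1, h2, if_true]
        exact hc k h'
      · subst h'
        simp [hcn, hd0, h]
      · have h1 : ¬ k ≤ n := by omega
        have h2 : ¬ k + 1 ≤ n := by omega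
        have h3 : k + 1 - (n + 1) = k - (n + 1) + 1 := by omega
        simp only [h1, h2, if_false, h3]
        exact hd _ (by omega)) n (by omega)
  simpa [hcn, hd0] using this

lemma arpath_of_reach {X : IndecModA R} (hX : IsCycleFiniteModule X.1) {a b : ARVertex R}
    (h : Reach a b) : Reach (ARVertex.mk X) a → Reach b (ARVertex.mk X) →
    Relation.ReflTransGen ARArrow a b := by
  intro h1
  induction h with
  | refl => exact fun _ => Relation.ReflTransGen.refl
  | tail hab hbc ih =>
    intro h2
    exact (ih (Relation.ReflTransGen.head hbc h2)).trans
      (arpath_of_step hX (h1.trans hab) hbc h2)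

/-- A module mutually reachable with a cycle-finite module of the cyclic component `Γ`
belongs to `Γ`. -/
lemma mem_component {Γ : Set (ARVertex R)} (hΓ : IsCyclicComponent Γ) {X : IndecModA R}
    (hX : IsCycleFiniteModule X.1) (hXΓ : ARVertex.mk X ∈ Γ) {v : ARVertex R}
    (h1 : Reach (ARVertex.mk X) v) (h2 : Reach v (ARVertex.mk X)) : v ∈ Γ := by
  have p1 := arpath_of_reach hX h1 Relation.ReflTransGen.refl h2
  have p2 := arpath_of_reach hX h2 h1 Relation.ReflTransGen.refl
  have hcyc : OnARCycle (ARVertex.mk X) := hΓ.1 hXΓ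
  clear h1 h2
  induction p1 with
  | refl => exact hXΓ
  | tail hab hbc ih =>
    rename_i b c
    have hb : b ∈ Γ := ih (Relation.ReflTransGen.head hbc p2)
    refine hΓ.2.2.1 b hb c ?_ (Or.inl hbc)
    change Relation.TransGen ARArrow c c
    exact (Relation.TransGen.trans_right p2 hcyc).trans_left (hab.tail hbc)

end Reach

end CFC

namespace CFC

section Local

variable {R : Type u} [Ring R]

lemma span_sing_mem {x a : R} : x ∈ Ideal.span {a} ↔ ∃ r, r * a = x := by
  rw [Ideal.mem_span_singleton']

/-- Corner dichotomy for a primitive idempotent in an artinian ring. -/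
lemma corner [IsNoetherian R R] [IsArtinian R R] {e : R} (he : IsPrimitiveIdempotent R e)
    {a : R} (h1 : e * a = a) (h2 : a * e = a) :
    (∃ n, a ^ n = 0) ∨ ∃ r, r * a = e := by
  let ρ : Module.End R R := LinearMap.toSpanSingleton R R a
  have hρ : ∀ (n : ℕ) (x : R), (ρ ^ n) x = x * a ^ n := by
    intro n
    induction n with
    | zero => intro x; simp
    | succ n ih =>
      intro x
      rw [pow_succ', Module.End.mul_apply, ih]
      simp [ρ, pow_succ, mul_assoc]
  obtain ⟨n, hn⟩ := Filter.eventually_atTop.mp ρ.eventually_isCompl_ker_pow_range_pow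
  have hc := hn (n + 1) (Nat.le_succ n)
  have h1' : e * a ^ (n + 1) = a ^ (n + 1) := by rw [pow_succ', ← mul_assoc, h1]
  have h2' : a ^ (n + 1) * e = a ^ (n + 1) := by rw [pow_succ, mul_assoc, h2]
  have h1t : (1 : R) ∈ LinearMap.ker (ρ ^ (n + 1)) ⊔ LinearMap.range (ρ ^ (n + 1)) := by
    rw [hc.sup_eq_top]; trivial
  obtain ⟨k, hk, f, hf, hkf⟩ := Submodule.mem_sup.mp h1t
  have hfi : f = f * f := by
    have hfk : f * k = f - f * f := by
      have : f * (k + f) = f := by rw [hkf, mul_one]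
      rw [mul_add] at this
      exact eq_sub_of_add_eq this
    have hb : f * k ∈ LinearMap.ker (ρ ^ (n + 1)) ⊓ LinearMap.range (ρ ^ (n + 1)) := by
      refine ⟨Submodule.smul_mem _ f hk, ?_⟩
      rw [hfk]
      exact Submodule.sub_mem _ hf (Submodule.smul_mem _ f hf)
    rw [hc.inf_eq_bot, Submodule.mem_bot, hfk] at hb
    exact sub_eq_zero.mp hb
  obtain ⟨r, hr⟩ := hf
  rw [hρ] at hr
  have hk' : k * a ^ (n + 1) = 0 := by rw [← hρ]; exact hk
  have hfe : f * e = f := by rw [← hr, mul_assoc, h2']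
  have hee : e * e = e := he.1
  have hfa : f * a ^ (n + 1) = a ^ (n + 1) := by
    have : (k + f) * a ^ (n + 1) = a ^ (n + 1) := by rw [hkf, one_mul]
    rwa [add_mul, hk', zero_add] at this
  have hi : (e * f) * (e * f) = e * f := by
    rw [mul_assoc, ← mul_assoc f e f, hfe, ← hfi]
  have hl : e * (e * f) = e * f := by rw [← mul_assoc, hee]
  have hr' : (e * f) * e = e * f := by rw [mul_assoc, hfe]
  rcases he.2.2 (e * f) (e - e * f) hi
    (by
      change (e - e * f) * (e - e * f) = e - e * f
      rw [sub_mul, mul_sub, mul_sub, hee, hl, hr', hi]; abel)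
    (by rw [mul_sub, hr', hi, sub_self]) (by rw [sub_mul, hl, hi, sub_self])
    (by abel) with h | h
  · left
    refine ⟨n + 1, ?_⟩
    rw [← h1', ← hfa, ← mul_assoc, h, zero_mul]
  · right
    refine ⟨e * r * a ^ n, ?_⟩
    rw [mul_assoc, ← pow_succ, mul_assoc, hr]
    exact (sub_eq_zero.mp h).symm

/-- The Jacobson radical. -/
abbrev JJ (R : Type u) [Ring R] : Ideal R := (⊥ : Ideal R).jacobson

lemma jj_iff {x : R} : x ∈ JJ R ↔ ∀ y, ∃ z, z * y * x + z - 1 = 0 := by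
  rw [Ideal.mem_jacobson_iff]; rfl

lemma jj_unit {x : R} (hx : x ∈ JJ R) : ∃ z, z * (1 - x) = 1 := by
  obtain ⟨z, hz⟩ := jj_iff.mp hx (-1)
  refine ⟨z, ?_⟩
  have : z * (1 - x) = (z * -1 * x + z - 1) + 1 := by noncomm_ring
  rw [this, hz, zero_add]

lemma jj_of_nil {x : R} (h : ∀ c, ∃ n, (c * x) ^ n = 0) : x ∈ JJ R := by
  rw [jj_iff]
  intro y
  have hn : IsNilpotent (y * x) := h y
  obtain ⟨u, hu⟩ := hn.isUnit_add_one
  refine ⟨(u⁻¹ : Rˣ), ?_⟩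
  have : ((u⁻¹ : Rˣ) : R) * (y * x + 1) = 1 := by rw [← hu]; simp
  rw [mul_add, mul_one, ← mul_assoc] at this
  rw [this, sub_self]

lemma jj_mul_right {x : R} (hx : x ∈ JJ R) (c : R) : x * c ∈ JJ R :=
  Ideal.mul_mem_right c _ hx

end Local

end CFC

namespace CFC

section Local2

variable {R : Type u} [Ring R]

/-- The unique maximal left ideal containing `1 - e`. -/
def maxI (e : R) : Ideal R := JJ R ⊔ Ideal.span {1 - e}

lemma one_sub_mem_maxI (e : R) : 1 - e ∈ maxI e :=
  Submodule.mem_sup_right (Ideal.subset_span rfl)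

lemma jj_mem_maxI {e x : R} (hx : x ∈ JJ R) : x ∈ maxI e := Submodule.mem_sup_left hx

lemma maxI_ne_top {e : R} (he : IsPrimitiveIdempotent R e) : (1 : R) ∉ maxI e := by
  intro h
  obtain ⟨j, hj, s, hs, hjs⟩ := Submodule.mem_sup.mp h
  obtain ⟨r, rfl⟩ := span_sing_mem.mp hs
  have hee : e * e = e := he.1
  have h1 : j * e = e := by
    have : (j + r * (1 - e)) * e = e := by rw [hjs, one_mul]
    rwa [add_mul, mul_assoc, sub_mul, one_mul, hee, sub_self, mul_zero, add_zero] at this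
  obtain ⟨z, hz⟩ := jj_unit hj
  apply he.2.1
  have : (1 - j) * e = 0 := by rw [sub_mul, one_mul, h1, sub_self]
  calc e = z * (1 - j) * e := by rw [hz, one_mul]
    _ = 0 := by rw [mul_assoc, this, mul_zero]

lemma e_notMem_maxI {e : R} (he : IsPrimitiveIdempotent R e) : e ∉ maxI e := by
  intro h
  apply maxI_ne_top he
  have := (maxI e).add_mem h (one_sub_mem_maxI e)
  simpa using this

lemma le_maxI [IsNoetherian R R] [IsArtinian R R] {e : R} (he : IsPrimitiveIdempotent R e)
    {I : Ideal R} (hI : 1 - e ∈ I) (h1 : (1 : R) ∉ I) : I ≤ maxI e := by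
  intro a ha
  have hee : e * e = e := he.1
  have hae : a * e ∈ I := by
    have : a * e = a - a * (1 - e) := by noncomm_ring
    rw [this]
    exact I.sub_mem ha (I.mul_mem_left a hI)
  have hJ : a * e ∈ JJ R := by
    apply jj_of_nil
    intro c
    rcases corner he (a := e * c * a * e) (by simp only [← mul_assoc, hee])
      (by rw [mul_assoc, hee]) with ⟨n, hn⟩ | ⟨r, hr⟩
    · refine ⟨n + 1, ?_⟩
      have key : ∀ n : ℕ, (c * (a * e)) ^ (n + 1) = c * (a * e) * (e * c * a * e) ^ n := by
        intro n
        induction n with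
        | zero => simp
        | succ n ih =>
          have h3 : c * (a * e) * (c * (a * e)) = c * (a * e) * (e * c * a * e) := by
            calc c * (a * e) * (c * (a * e)) = c * (a * (e * (c * (a * e)))) := by noncomm_ring
              _ = c * (a * (e * e * (c * (a * e)))) := by rw [hee]
              _ = _ := by noncomm_ring
          rw [pow_succ', ih, pow_succ' (e * c * a * e), ← mul_assoc (c * (a * e)) (c * (a * e)), h3,
            mul_assoc (c * (a * e)) (e * c * a * e)]
      rw [key, hn, mul_zero]
    · exfalso
      apply h1
      have he' : e ∈ I := by
        rw [← hr]
        have : r * (e * c * a * e) = (r * e * c) * (a * e) := by noncomm_ring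
        rw [this]
        exact I.mul_mem_left _ hae
      have := I.add_mem he' hI
      simpa using this
  have : a = a * e + a * (1 - e) := by noncomm_ring
  rw [this]
  exact (maxI e).add_mem (jj_mem_maxI hJ) ((maxI e).mul_mem_left a (one_sub_mem_maxI e))

/-- Quotients of `R` by proper left ideals containing `1 - e` are indecomposable. -/
lemma quot_indec [IsNoetherian R R] [IsArtinian R R] {e : R} (he : IsPrimitiveIdempotent R e)
    {I : Ideal R} (hI : 1 - e ∈ I) (h1 : (1 : R) ∉ I) : IsIndecMod R (R ⧸ I) := by
  refine ⟨Submodule.Quotient.nontrivial_iff.mpr (fun h => h1 (h ▸ trivial)), ?_⟩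
  intro θ hθ
  have hθ' : ∀ x, θ (θ x) = θ x := fun x => LinearMap.congr_fun hθ x
  have main : ∀ φ : Module.End R (R ⧸ I), (∀ x, φ (φ x) = φ x) → φ ≠ 1 →
      ∀ a : R, Submodule.Quotient.mk a ∈ LinearMap.range φ → a ∈ maxI e := by
    intro φ hφ hne
    have := le_maxI he (I := (LinearMap.range φ).comap I.mkQ) (by
      change I.mkQ (1 - e) ∈ LinearMap.range φ
      have : I.mkQ (1 - e) = 0 := by
        rw [Submodule.mkQ_apply, Submodule.Quotient.mk_eq_zero]; exact hI
      rw [this]; exact Submodule.zero_mem _) (by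
      intro h
      apply hne
      obtain ⟨y, hy⟩ := h
      have h2 : φ (I.mkQ 1) = I.mkQ 1 := by rw [← hy, hφ]
      apply Submodule.linearMap_qext
      ext
      exact h2)
    intro a ha
    exact this ha
  by_contra hcon
  push Not at hcon
  have hψ : ∀ x, (1 - θ) ((1 - θ) x) = (1 - θ) x := by
    intro x
    simp [hθ']
  obtain ⟨a, ha⟩ := Submodule.Quotient.mk_surjective I (θ (Submodule.Quotient.mk 1))
  have m1 := main θ hθ' hcon.2 a ⟨_, ha.symm⟩
  have m2 := main (1 - θ) hψ (fun h => hcon.1 (by simpa using h)) (1 - a)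
    ⟨Submodule.Quotient.mk 1, by simp [ha]⟩
  apply maxI_ne_top he
  have := (maxI e).add_mem m1 m2
  simpa using this

/-- The quotient `R / I` as an indecomposable object. -/
def quotM [IsNoetherian R R] [IsArtinian R R] {e : R} (he : IsPrimitiveIdempotent R e)
    {I : Ideal R} (hI : 1 - e ∈ I) (h1 : (1 : R) ∉ I) : IndecModA R :=
  ⟨mkM R (R ⧸ I), quot_indec he hI h1⟩

/-- The simple top at a primitive idempotent. -/
def topM [IsNoetherian R R] [IsArtinian R R] {e : R} (he : IsPrimitiveIdempotent R e) :
    IndecModA R := quotM he (one_sub_mem_maxI e) (maxI_ne_top he)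

/-- Lemma A. -/
lemma lemA [IsNoetherian R R] [IsArtinian R R] {e f b : R} (he : IsPrimitiveIdempotent R e)
    (hf : IsPrimitiveIdempotent R f) (hb : b ≠ 0) (hfb : f * b = b) (hbe : b * e = b)
    (X : IndecModA R) (x : X.1.M) (hx : x ≠ 0) (hex : e • x = x) (hbx : b • x = 0) :
    Reach (ARVertex.mk (topM hf)) (ARVertex.mk X) := by
  have hee : e * e = e := he.1
  let I : Ideal R := Submodule.map (LinearMap.toSpanSingleton R R b) (JJ R) ⊔ Ideal.span {1 - e}
  have hIx : I ≤ LinearMap.ker (LinearMap.toSpanSingleton R X.1.M x) := by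
    refine sup_le ?_ ?_
    · rintro _ ⟨j, hj, rfl⟩
      simp [mul_smul, hbx]
    · rw [Ideal.span_le]
      rintro _ rfl
      simp [sub_smul, hex]
  have hI1 : 1 - e ∈ I := Submodule.mem_sup_right (Ideal.subset_span rfl)
  have h1 : (1 : R) ∉ I := by
    intro h
    have := hIx h
    simp at this
    exact hx this
  have hbI : b ∉ I := by
    intro h
    obtain ⟨s, ⟨j, hj, hjs⟩, t, ht, hst⟩ := Submodule.mem_sup.mp h
    obtain ⟨r, rfl⟩ := span_sing_mem.mp ht
    have hs : s = j * b := by rw [← hjs]; simp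
    have h2 : j * b = b := by
      have : (s + r * (1 - e)) * e = b := by rw [hst, hbe]
      rwa [hs, add_mul, mul_assoc, mul_assoc, hbe, sub_mul, one_mul, hee, sub_self, mul_zero,
        add_zero] at this
    obtain ⟨z, hz⟩ := jj_unit hj
    apply hb
    have : (1 - j) * b = 0 := by rw [sub_mul, one_mul, h2, sub_self]
    calc b = z * (1 - j) * b := by rw [hz, one_mul]
      _ = 0 := by rw [mul_assoc, this, mul_zero]
  have hM : maxI f ≤ LinearMap.ker (I.mkQ.comp (LinearMap.toSpanSingleton R R b)) := by
    refine sup_le ?_ ?_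
    · intro j hj
      rw [LinearMap.mem_ker, LinearMap.comp_apply, Submodule.mkQ_apply,
        Submodule.Quotient.mk_eq_zero]
      exact Submodule.mem_sup_left ⟨j, hj, rfl⟩
    · rw [Ideal.span_le]
      rintro _ rfl
      simp [sub_mul, hfb]
  have r1 : Reach (ARVertex.mk (topM hf)) (ARVertex.mk (quotM he hI1 h1)) := by
    refine reach_of_ne_zero (X := topM hf) (Y := quotM he hI1 h1)
      (Submodule.liftQ (maxI f) (I.mkQ.comp (LinearMap.toSpanSingleton R R b)) hM) ?_
    intro h
    have h3 := LinearMap.congr_fun h (Submodule.Quotient.mk (1 : R))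
    have h4 : I.mkQ ((1 : R) • b) = 0 := h3
    rw [one_smul, Submodule.mkQ_apply, Submodule.Quotient.mk_eq_zero] at h4
    exact hbI h4
  refine r1.trans (reach_of_ne_zero (X := quotM he hI1 h1) (Y := X)
      (Submodule.liftQ I (LinearMap.toSpanSingleton R X.1.M x) hIx) ?_)
  intro h
  have h3 := LinearMap.congr_fun h (Submodule.Quotient.mk (1 : R))
  have h4 : (1 : R) • x = 0 := h3
  rw [one_smul] at h4
  exact hx h4

end Local2

end CFC

namespace CFC

section Local3

variable {R : Type u} [Ring R]

/-- Lemma B. -/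
lemma lemB [IsNoetherian R R] [IsArtinian R R] {e f b : R} (he : IsPrimitiveIdempotent R e)
    (hf : IsPrimitiveIdempotent R f) (hb : b ≠ 0) (hfb : f * b = b) (hbe : b * e = b)
    (Y : IndecModA R) (y : Y.1.M) (hy : y ≠ 0) (hfy : f • y = y)
    (heY : ∀ m : Y.1.M, e • m = 0) :
    Reach (ARVertex.mk Y) (ARVertex.mk (topM he)) := by
  have hee : e * e = e := he.1
  have hff : f * f = f := hf.1
  let L0 : Submodule R (Y.1.M × R) := Submodule.span R {(0, 1 - e), (y, -b)}
  have hL0 : ((y, 0) : Y.1.M × R) ∉ L0 := by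
    intro h
    obtain ⟨r, a, hra⟩ := Submodule.mem_span_pair.mp h
    have e1 : a • y = y := by simpa using congrArg Prod.fst hra
    have e2 : r * (1 - e) - a * b = 0 := by
      have := congrArg Prod.snd hra
      simpa [sub_eq_add_neg] using this
    have e3 : a * b = 0 := by
      have : (r * (1 - e) - a * b) * e = 0 := by rw [e2, zero_mul]
      rw [sub_mul, mul_assoc, mul_assoc, hbe, sub_mul, one_mul, hee, sub_self, mul_zero,
        zero_sub, neg_eq_zero] at this
      exact this
    have e4 : (f * a * f) • y = y := by
      rw [mul_smul, hfy, mul_smul, e1, hfy]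
    rcases corner hf (a := f * a * f) (by simp only [← mul_assoc, hff])
      (by rw [mul_assoc, hff]) with ⟨n, hn⟩ | ⟨r', hr'⟩
    · apply hy
      have : ∀ n : ℕ, (f * a * f) ^ n • y = y := by
        intro n
        induction n with
        | zero => simp
        | succ n ih => rw [pow_succ, mul_smul, e4, ih]
      rw [← this n, hn, zero_smul]
    · apply hb
      calc b = f * b := hfb.symm
        _ = r' * (f * a * f) * b := by rw [hr']
        _ = r' * (f * (a * (f * b))) := by noncomm_ring
        _ = 0 := by rw [hfb, e3, mul_zero, mul_zero]
  obtain ⟨L, ⟨hLL, hLy⟩, hmax⟩ := WellFounded.has_min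
    (wellFounded_gt : WellFounded (α := Submodule R (Y.1.M × R)) (· > ·))
    {L | L0 ≤ L ∧ ((y, 0) : Y.1.M × R) ∉ L} ⟨L0, le_rfl, hL0⟩
  have hmax' : ∀ N : Submodule R (Y.1.M × R), L < N → ((y, 0) : Y.1.M × R) ∈ N := by
    intro N hN
    by_contra hc
    exact hmax N ⟨hLL.trans hN.le, hc⟩ hN
  have hm1 : ((0, 1 - e) : Y.1.M × R) ∈ L := hLL (Submodule.subset_span (by simp))
  have hm2 : ((y, -b) : Y.1.M × R) ∈ L := hLL (Submodule.subset_span (by simp))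
  let w : (Y.1.M × R) ⧸ L := L.mkQ (y, 0)
  have hw : w ≠ 0 := by
    intro h
    apply hLy
    rwa [← Submodule.Quotient.mk_eq_zero]
  have hsub : ∀ N : Submodule R ((Y.1.M × R) ⧸ L), N ≠ ⊥ → w ∈ N := by
    intro N hN
    obtain ⟨z, hz, hz0⟩ := Submodule.exists_mem_ne_zero_of_ne_bot hN
    obtain ⟨z', rfl⟩ := Submodule.mkQ_surjective L z
    have : L < N.comap L.mkQ := by
      refine lt_of_le_of_ne ?_ ?_
      · intro l hl
        rw [Submodule.mem_comap]
        have : L.mkQ l = 0 := by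
          rw [Submodule.mkQ_apply, Submodule.Quotient.mk_eq_zero]; exact hl
        rw [this]
        exact N.zero_mem
      · intro h
        apply hz0
        have h2 : z' ∈ N.comap L.mkQ := hz
        rw [← h] at h2
        rw [Submodule.mkQ_apply, Submodule.Quotient.mk_eq_zero]
        exact h2
    exact hmax' _ this
  have hind : IsIndecMod R ((Y.1.M × R) ⧸ L) := by
    refine ⟨⟨w, 0, hw⟩, ?_⟩
    intro θ hθ
    have hθ' : ∀ x, θ (θ x) = θ x := fun x => LinearMap.congr_fun hθ x
    by_contra hcon
    push Not at hcon
    have h1 : w ∈ LinearMap.range θ :=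
      hsub _ (fun h => hcon.1 (LinearMap.range_eq_bot.mp h))
    have h2 : w ∈ LinearMap.range (1 - θ) :=
      hsub _ (fun h => hcon.2 (sub_eq_zero.mp (LinearMap.range_eq_bot.mp h)).symm)
    obtain ⟨p, hp⟩ := h1
    obtain ⟨q, hq⟩ := h2
    apply hw
    have h3 : θ w = w := by rw [← hp, hθ']
    rw [← h3, ← hq]
    simp [hθ']
  let G : IndecModA R := ⟨mkM R ((Y.1.M × R) ⧸ L), hind⟩
  have r1 : Reach (ARVertex.mk Y) (ARVertex.mk G) := by
    refine reach_of_ne_zero (X := Y) (Y := G) (L.mkQ.comp (LinearMap.inl R Y.1.M R)) ?_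
    intro h
    exact hw (LinearMap.congr_fun h y)
  have hle : L.map (LinearMap.snd R Y.1.M R) ≤ maxI e := by
    apply le_maxI he
    · exact ⟨(0, 1 - e), hm1, rfl⟩
    · rintro ⟨⟨m, t⟩, hm, ht⟩
      have ht' : t = 1 := ht
      subst ht'
      have h1 := L.smul_mem e hm
      have h2 : ((0, b) : Y.1.M × R) ∈ L := by
        have := L.smul_mem b h1
        simpa [heY, hbe] using this
      apply hLy
      have := L.add_mem hm2 h2
      simpa using this
  have hker : L ≤ LinearMap.ker ((maxI e).mkQ.comp (LinearMap.snd R Y.1.M R)) := by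
    intro l hl
    rw [LinearMap.mem_ker, LinearMap.comp_apply, Submodule.mkQ_apply,
      Submodule.Quotient.mk_eq_zero]
    exact hle ⟨l, hl, rfl⟩
  refine r1.trans (reach_of_ne_zero (X := G) (Y := topM he)
    (Submodule.liftQ L ((maxI e).mkQ.comp (LinearMap.snd R Y.1.M R)) hker) ?_)
  intro h
  have h3 : (maxI e).mkQ (1 : R) = 0 :=
    LinearMap.congr_fun h (Submodule.Quotient.mk ((0, 1) : Y.1.M × R))
  rw [Submodule.mkQ_apply, Submodule.Quotient.mk_eq_zero] at h3
  exact maxI_ne_top he h3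

/-- Lemma A between tops. -/
lemma lemAtop [IsNoetherian R R] [IsArtinian R R] {e f b : R} (he : IsPrimitiveIdempotent R e)
    (hf : IsPrimitiveIdempotent R f) (hb : b ≠ 0) (hfb : f * b = b) (hbe : b * e = b)
    (hJ : b ∈ JJ R) : Reach (ARVertex.mk (topM hf)) (ARVertex.mk (topM he)) := by
  have hmk : ∀ r s : R, r • (Submodule.Quotient.mk s : R ⧸ maxI e) =
      Submodule.Quotient.mk (r * s) := fun r s => rfl
  refine lemA he hf hb hfb hbe (topM he) (Submodule.Quotient.mk (1 : R) : R ⧸ maxI e) ?_ ?_ ?_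
  · intro h
    exact maxI_ne_top he ((Submodule.Quotient.mk_eq_zero _).mp h)
  · change (Submodule.Quotient.mk (e * 1) : R ⧸ maxI e) = Submodule.Quotient.mk 1
    rw [Submodule.Quotient.eq, mul_one]
    have := (maxI e).neg_mem (one_sub_mem_maxI e)
    simpa using this
  · change (Submodule.Quotient.mk (b * 1) : R ⧸ maxI e) = 0
    rw [Submodule.Quotient.mk_eq_zero, mul_one]
    exact jj_mem_maxI hJ

lemma top_supp [IsNoetherian R R] [IsArtinian R R] {e : R} (he : IsPrimitiveIdempotent R e) :
    ∃ m : (topM he).1.M, e • m ≠ 0 := by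
  refine ⟨(Submodule.Quotient.mk (1 : R) : R ⧸ maxI e), ?_⟩
  change ¬ (Submodule.Quotient.mk (e * 1) : R ⧸ maxI e) = 0
  rw [Submodule.Quotient.mk_eq_zero, mul_one]
  exact e_notMem_maxI he

lemma prim_op {A : Type u} [Ring A] {e : A} (he : IsPrimitiveIdempotent A e) :
    IsPrimitiveIdempotent Aᵐᵒᵖ (MulOpposite.op e) := by
  refine ⟨?_, ?_, ?_⟩
  · change MulOpposite.op e * MulOpposite.op e = MulOpposite.op e
    rw [← MulOpposite.op_mul, he.1]
  · simpa using he.2.1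
  · intro f g hf hg hfg hgf hefg
    have := he.2.2 f.unop g.unop
      (by change f.unop * f.unop = f.unop; rw [← MulOpposite.unop_mul, hf])
      (by change g.unop * g.unop = g.unop; rw [← MulOpposite.unop_mul, hg])
      (by rw [← MulOpposite.unop_mul, hgf, MulOpposite.unop_zero])
      (by rw [← MulOpposite.unop_mul, hfg, MulOpposite.unop_zero])
      (by rw [← MulOpposite.unop_add, ← hefg, MulOpposite.unop_op])
    simpa using this

lemma jj_op {A : Type u} [Ring A] {y : A} (hy : y ∈ jacobsonRad A) :
    MulOpposite.op y ∈ JJ Aᵐᵒᵖ := by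
  have hinv : ∀ x : A, x ∈ JJ A → ∃ z, (1 + x) * z = 1 := by
    intro x hx
    obtain ⟨z, hz⟩ := jj_unit ((JJ A).neg_mem hx)
    rw [sub_neg_eq_add] at hz
    have hzx : 1 - z = z * x := by
      rw [← hz]; noncomm_ring
    obtain ⟨z', hz'⟩ := jj_unit ((JJ A).mul_mem_left z hx)
    rw [← hzx, sub_sub_cancel] at hz'
    refine ⟨z, ?_⟩
    have : z' = 1 + x := by
      calc z' = z' * (z * (1 + x)) := by rw [hz, mul_one]
        _ = 1 + x := by rw [← mul_assoc, hz', one_mul]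
    rw [← this]
    exact hz'
  rw [jj_iff]
  intro c
  obtain ⟨z, hz⟩ := hinv (y * c.unop) (jj_mul_right hy _)
  refine ⟨MulOpposite.op z, ?_⟩
  apply MulOpposite.unop_injective
  simp only [MulOpposite.unop_sub, MulOpposite.unop_add, MulOpposite.unop_mul,
    MulOpposite.unop_op, MulOpposite.unop_one, MulOpposite.unop_zero]
  rw [add_mul, one_mul, mul_assoc] at hz
  rw [add_comm, hz, sub_self]

/-- Properties of the element given by an arrow. -/
lemma arrow_elt {A : Type u} [Ring A] {E : CompleteIdemFamily A} {i j : Fin E.n}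
    (h : QAarrow A E i j) : ∃ b : Aᵐᵒᵖ, b ≠ 0 ∧ MulOpposite.op (E.e j) * b = b ∧
      b * MulOpposite.op (E.e i) = b ∧ b ∈ JJ Aᵐᵒᵖ := by
  obtain ⟨y, hy, hn⟩ := h
  have hi : E.e i * E.e i = E.e i := (E.prim i).1
  have hj : E.e j * E.e j = E.e j := (E.prim j).1
  refine ⟨MulOpposite.op (E.e i * y * E.e j), ?_, ?_, ?_, ?_⟩
  · intro h0
    apply hn
    rw [MulOpposite.op_eq_zero_iff] at h0
    rw [h0]
    exact Submodule.zero_mem _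
  · rw [← MulOpposite.op_mul, mul_assoc, hj]
  · rw [← MulOpposite.op_mul]
    simp only [← mul_assoc, hi]
  · apply jj_op
    exact jj_mul_right ((JJ A).mul_mem_left _ hy) _

lemma main_thm (A : Type u) [Ring A] [IsNoetherian Aᵐᵒᵖ Aᵐᵒᵖ] [IsArtinian Aᵐᵒᵖ Aᵐᵒᵖ]
    (Γ : Set (ARVertex Aᵐᵒᵖ)) (hΓ : IsCycleFiniteCyclicComponent Γ)
    (E : CompleteIdemFamily A) :
    ConvexVertexSet A E {i | ∃ x ∈ Γ, ∃ X : IndecModA Aᵐᵒᵖ, ARVertex.mk X = x ∧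
      ∃ m : X.1.M, MulOpposite.op (E.e i) • m ≠ 0} := by
  obtain ⟨hC, x0, hx0, X0, rfl, hX0⟩ := hΓ
  intro n c hc h0 hn
  have hp : ∀ i, IsPrimitiveIdempotent Aᵐᵒᵖ (MulOpposite.op (E.e i)) := fun i => prim_op (E.prim i)
  have hid : ∀ i, MulOpposite.op (E.e i) * MulOpposite.op (E.e i) = MulOpposite.op (E.e i) :=
    fun i => (hp i).1
  set Supp : Set (Fin E.n) := {i | ∃ x ∈ Γ, ∃ X : IndecModA Aᵐᵒᵖ, ARVertex.mk X = x ∧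
      ∃ m : X.1.M, MulOpposite.op (E.e i) • m ≠ 0} with hS
  have hns : ∀ i, i ∉ Supp → ∀ X : IndecModA Aᵐᵒᵖ, ARVertex.mk X ∈ Γ → ∀ m : X.1.M,
      MulOpposite.op (E.e i) • m = 0 := by
    intro i hi X hX m
    by_contra hm
    exact hi ⟨_, hX, X, rfl, m, hm⟩
  have hA : ∀ k ≤ n, c k ∉ Supp → Reach (ARVertex.mk (topM (hp (c k)))) (ARVertex.mk X0) := by
    intro k
    induction k with
    | zero => exact fun _ h => absurd h0 h
    | succ k ih =>
      intro hk hnot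
      obtain ⟨b, hb, hjb, hbi, hbJ⟩ := arrow_elt (hc k (by omega))
      by_cases hck : c k ∈ Supp
      · obtain ⟨_, hXΓ, X, rfl, m, hm⟩ := hck
        refine (lemA (hp (c k)) (hp (c (k + 1))) hb hjb hbi X
          (MulOpposite.op (E.e (c k)) • m) hm ?_ ?_).trans (reach_in_component hC hXΓ hx0)
        · rw [← mul_smul, hid]
        · rw [← hjb, mul_smul]
          exact hns _ hnot X hXΓ _
      · exact (lemAtop (hp (c k)) (hp (c (k + 1))) hb hjb hbi hbJ).trans (ih (by omega) hck)
  have hB : ∀ d k, k + d = n → c k ∉ Supp →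
      Reach (ARVertex.mk X0) (ARVertex.mk (topM (hp (c k)))) := by
    intro d
    induction d with
    | zero =>
      intro k hk h
      have : k = n := by omega
      subst this
      exact absurd hn h
    | succ d ih =>
      intro k hk hnot
      obtain ⟨b, hb, hjb, hbi, hbJ⟩ := arrow_elt (hc k (by omega))
      by_cases hck : c (k + 1) ∈ Supp
      · obtain ⟨_, hXΓ, X, rfl, m, hm⟩ := hck
        refine (reach_in_component hC hx0 hXΓ).trans
          (lemB (hp (c k)) (hp (c (k + 1))) hb hjb hbi X
          (MulOpposite.op (E.e (c (k + 1))) • m) hm ?_ (hns _ hnot X hXΓ))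
        rw [← mul_smul, hid]
      · exact (ih (k + 1) (by omega) hck).trans
          (lemAtop (hp (c k)) (hp (c (k + 1))) hb hjb hbi hbJ)
  intro k hk
  by_contra hnot
  have hmem := mem_component hC hX0 hx0 (hB (n - k) k (by omega) hnot) (hA k hk hnot)
  exact hnot ⟨_, hmem, _, rfl, top_supp (hp (c k))⟩

end Local3

end CFC

/-- **Proposition (convexity of the support).** Let `A` be a basic indecomposable artin
algebra and `Γ` a cycle-finite component of the cyclic quiver `_cΓ_A`. Then the support
`supp(Γ)` of `Γ` — the set of vertices `i` of `Q_A` with `X e_i ≠ 0` for some module `X`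
in `Γ` — is a convex subcategory of `A`. -/
theorem support_of_cycle_finite_component_convex
    (K A : Type u) [CommRing K] [IsArtinianRing K] [Ring A] [Algebra K A]
    [Module.Finite K A] (hbasic : IsBasicAlgebra A) (hconn : IsConnectedAlgebra A)
    (Γ : Set (ARVertex Aᵐᵒᵖ)) (hΓ : IsCycleFiniteCyclicComponent Γ)
    (E : CompleteIdemFamily A) :
    ConvexVertexSet A E {i | ∃ x ∈ Γ, ∃ X : IndecModA Aᵐᵒᵖ, ARVertex.mk X = x ∧
      ∃ m : X.1.M, MulOpposite.op (E.e i) • m ≠ 0} := by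
  have hfin : Module.Finite K Aᵐᵒᵖ :=
    Module.Finite.equiv (MulOpposite.opLinearEquiv K : A ≃ₗ[K] Aᵐᵒᵖ)
  have h1 : IsNoetherian Aᵐᵒᵖ Aᵐᵒᵖ := isNoetherian_of_tower K inferInstance
  have h2 : IsArtinian Aᵐᵒᵖ Aᵐᵒᵖ := isArtinian_of_tower K inferInstance
  exact CFC.main_thm A Γ hΓ E
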